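/- Let n > 1 and d ≥ 3 be integers with gcd(n,d) = 1, and let a, b be indeterminates. Then the sum over k from 0 to n−1 of [2dk−1] · (aq^{−1}, q^{−1}/a, bq^{−1}, q^{−1}/b; q^d)_k · (q^{−1}; q^d)_k^2 / ( (aq^d, q^d/a, bq^d, q^d/b; q^d)_k · (q^d; q^d)_k^2 ) · q^{(2d+3)k} is congruent to 0 modulo [n]·Φ_n(q) if n ≡ 1 (mod d), and congruent to 0 modulo [n] otherwise. -/

import Mathlib

open Finset

noncomputable section

/-- Polynomial ring in the variables `q, a, b, c` (indices `0,1,2,3`). -/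
abbrev R : Type := MvPolynomial (Fin 4) ℚ

/-- Field of rational functions in `q, a, b, c`. -/
abbrev K : Type := FractionRing R

def qv : K := algebraMap R K (MvPolynomial.X 0)
def av : K := algebraMap R K (MvPolynomial.X 1)
def bv : K := algebraMap R K (MvPolynomial.X 2)
def cv : K := algebraMap R K (MvPolynomial.X 3)

/-- The q-shifted factorial `(x; Q)_k = (1-x)(1-xQ)⋯(1-xQ^{k-1})`. -/
def poch (x Q : K) (k : ℕ) : K := ∏ i ∈ Finset.range k, (1 - x * Q ^ i)

/-- The q-integer `[m] = (1-q^m)/(1-q)` (allowing integer `m`). -/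
def qint (m : ℤ) : K := (1 - qv ^ m) / (1 - qv)

/-- The n-th cyclotomic polynomial, as a polynomial in the variable `q`. -/
def Phi (n : ℕ) : R :=
  Polynomial.eval₂ MvPolynomial.C (MvPolynomial.X 0) (Polynomial.cyclotomic n ℚ)

/-- `[n] = 1 + q + ⋯ + q^{n-1}` as a polynomial in `q`. -/
def qintR (n : ℕ) : R := ∑ i ∈ Finset.range n, (MvPolynomial.X 0 : R) ^ i

/-- `x ≡ 0 (mod M)` as rational functions: `x = M·f/g` where `g` shares no prime
factor with `M` (i.e. the numerator of `x` in lowest terms is divisible by `M`). -/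
def modCong (M : R) (x : K) : Prop :=
  ∃ f g : R, g ≠ 0 ∧ (∀ p : R, Prime p → p ∣ M → ¬ p ∣ g) ∧
    x * algebraMap R K g = algebraMap R K (M * f)

/-!
Put `Q = q ^ d`. The summand is, up to the factor `1 / (1 - q)`, the term of a very-well-poised
series in base `Q` with leading parameter `A = q⁻¹` and parameter pairs `(1, 1)`, `(a, a⁻¹)`,
`(b, b⁻¹)`. Since `[n]` is the product of the distinct primes `Φ_m(q)` with `m ∣ n`, `1 < m`, it
suffices to bound the valuation of the sum at each of them.

For `m ∣ n` choose `N < m` with `d N ≡ 1 (mod m)`, so that `A ≡ Q ^ (-N)` modulo `Φ_m(q)`. At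
`A = Q ^ (-N)` the terms `k` and `N - k` cancel, so the sum of the terms `k ≤ N` is divisible by
`A - Q ^ (-N)`, hence by `Φ_m(q)`. The terms with `N < k < m` are divisible by `Φ_m(q) ^ 2` because
of the pair `(1, 1)`, and the later blocks of `m` consecutive terms are integral multiples of series
of the same shape.

If `m = n = d r + 1`, let the leading parameter be a variable `X` and deform the pair `(1, 1)` along
with it, so that it becomes `(1, X Q ^ N)` at `X = Q ^ r`. There the terms are the Lagrange weights
for the `N + 1` nodes `Q ^ (-k) + X Q ^ k` times the values of a polynomial of degree
`2 (r - 1) < N`, so the sum vanishes. Now `Q ^ r` and `Q ^ (-N)` are two zeros, both congruent to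
`q⁻¹`, and the sum is divisible by `Φ_n(q) ^ 2`.
-/

namespace WellPoised

section ClearedTerm

variable {B B' ι : Type*} [CommRing B] [CommRing B'] [Fintype ι]

/-- The contribution of one pair of parameters `z, w` to the `k`-th term of a very-well-poised
series truncated at `N`: the quotient
`(Q / A) ^ k * ∏ j < k, (z - A Q ^ j) (w - A Q ^ j) / ((1 - z Q ^ (j + 1)) (1 - w Q ^ (j + 1)))`
cleared of the denominators of all the terms `k ≤ N`. -/
def pairNum (Q A z w : B) (N k : ℕ) : B :=
  Q ^ k * A ^ (N - k) * (∏ j ∈ range k, (z - A * Q ^ j) * (w - A * Q ^ j)) *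
    ∏ j ∈ Ico k N, (1 - z * Q ^ (j + 1)) * (1 - w * Q ^ (j + 1))

/-- The `k`-th term, cleared of denominators, of the very-well-poised series with base `Q`,
leading parameter `A` and parameter pairs `z i, w i`, truncated at `N`. -/
def termNum (Q A : B) (z w : ι → B) (N k : ℕ) : B :=
  (1 - A * Q ^ (2 * k)) * Q ^ (N - k) * ∏ i, pairNum Q A (z i) (w i) N k

lemma map_pairNum (φ : B →+* B') (Q A z w : B) (N k : ℕ) :
    φ (pairNum Q A z w N k) = pairNum (φ Q) (φ A) (φ z) (φ w) N k := by
  simp [pairNum, map_prod]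

lemma map_termNum (φ : B →+* B') (Q A : B) (z w : ι → B) (N k : ℕ) :
    φ (termNum Q A z w N k) = termNum (φ Q) (φ A) (fun i ↦ φ (z i)) (fun i ↦ φ (w i)) N k := by
  simp [termNum, map_prod, map_pairNum]

lemma eval_sum_termNum (Q A : Polynomial B) (z w : ι → Polynomial B) (N : ℕ) (x : B) :
    (∑ k ∈ range (N + 1), termNum Q A z w N k).eval x =
      ∑ k ∈ range (N + 1), termNum (Q.eval x) (A.eval x) (fun i ↦ (z i).eval x)
        (fun i ↦ (w i).eval x) N k := by
  rw [Polynomial.eval_finsetSum]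
  exact sum_congr rfl fun k _ ↦ map_termNum (Polynomial.evalRingHom x) Q A z w N k

lemma prod_pow_eq_pow_choose_two (Q : B) (k : ℕ) : ∏ j ∈ range k, Q ^ j = Q ^ k.choose 2 := by
  rw [prod_pow_eq_pow_sum, sum_range_id, Nat.choose_two_right]

lemma choose_two_mul_two_add_self (k : ℕ) : k.choose 2 * 2 + k = k * k := by
  rw [Nat.choose_two_right, Nat.div_two_mul_two_of_even (Nat.even_mul_pred_self k)]
  cases k with
  | zero => rfl
  | succ k => rw [Nat.add_sub_cancel]; ring

lemma prod_sub_mul_sub_of_mul_pow_eq_one {Q A : B} {k l : ℕ} (h : A * Q ^ (k + l) = 1) (z w : B) :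
    ∏ j ∈ range k, (z - A * Q ^ j) * (w - A * Q ^ j) =
      A ^ (2 * k) * Q ^ (2 * k.choose 2) *
        ∏ j ∈ Ico l (k + l), (1 - z * Q ^ (j + 1)) * (1 - w * Q ^ (j + 1)) := by
  have reflect : ∏ j ∈ Ico l (k + l), (1 - z * Q ^ (j + 1)) * (1 - w * Q ^ (j + 1)) =
      ∏ j ∈ range k, (1 - z * Q ^ (k + l - j)) * (1 - w * Q ^ (k + l - j)) := by
    rw [prod_Ico_eq_prod_range, Nat.add_sub_cancel, ← prod_range_reflect]
    refine prod_congr rfl fun j hj ↦ ?_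
    rw [show l + (k - 1 - j) + 1 = k + l - j by have := mem_range.1 hj; omega]
  have scalars : A ^ (2 * k) * Q ^ (2 * k.choose 2) = ∏ j ∈ range k, (A * Q ^ j) ^ 2 := by
    rw [prod_pow, prod_mul_distrib, prod_const, card_range, prod_pow_eq_pow_choose_two]
    ring
  rw [reflect, scalars, ← prod_mul_distrib]
  refine prod_congr rfl fun j hj ↦ ?_
  have unit : A * Q ^ j * Q ^ (k + l - j) = 1 := by
    rw [mul_assoc, ← pow_add, Nat.add_sub_cancel' (by have := mem_range.1 hj; omega), h]
  linear_combination (-(z * (w - A * Q ^ j)) - w * (z * A * Q ^ j * Q ^ (k + l - j) - A * Q ^ j)) *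
    unit

lemma pairNum_mul_pow_of_mul_pow_eq_one {Q A : B} {k l : ℕ} (h : A * Q ^ (k + l) = 1) (z w : B) :
    pairNum Q A z w (k + l) k * Q ^ (k * l) =
      A ^ (k + l) *
        ((∏ j ∈ Ico k (k + l), (1 - z * Q ^ (j + 1)) * (1 - w * Q ^ (j + 1))) *
          ∏ j ∈ Ico l (k + l), (1 - z * Q ^ (j + 1)) * (1 - w * Q ^ (j + 1))) := by
  have exponent : k + 2 * k.choose 2 + k * l = (k + l) * k := by
    linarith [choose_two_mul_two_add_self k]
  have power : Q ^ k * A ^ l * (A ^ (2 * k) * Q ^ (2 * k.choose 2)) * Q ^ (k * l) =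
      A ^ (k + l) := by
    calc _ = A ^ (k + l) * (A ^ k * Q ^ (k + 2 * k.choose 2 + k * l)) := by ring
      _ = A ^ (k + l) := by rw [exponent, pow_mul, ← mul_pow, h, one_pow, mul_one]
  rw [pairNum, prod_sub_mul_sub_of_mul_pow_eq_one h, Nat.add_sub_cancel_left, ← power]
  ring

lemma isUnit_of_mul_pow_eq_one {Q A : B} {N : ℕ} (hN : N ≠ 0) (h : A * Q ^ N = 1) : IsUnit Q :=
  (isUnit_pow_iff hN).1 (.of_mul_eq_one_right A h)

lemma pairNum_comm_of_mul_pow_eq_one {Q A : B} {k l : ℕ} (h : A * Q ^ (k + l) = 1) (z w : B) :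
    pairNum Q A z w (k + l) k = pairNum Q A z w (k + l) l := by
  rcases eq_or_ne (k + l) 0 with hkl | hkl
  · rw [show k = l by omega]
  · refine ((isUnit_of_mul_pow_eq_one hkl h).pow (k * l)).mul_right_cancel ?_
    have swapped := pairNum_mul_pow_of_mul_pow_eq_one (k := l) (l := k) (by rwa [add_comm]) z w
    rw [mul_comm l k, add_comm l k] at swapped
    rw [pairNum_mul_pow_of_mul_pow_eq_one h, swapped, mul_comm (∏ j ∈ Ico k _, _)]

lemma termNum_eq_of_mul_pow_eq_one {Q A : B} {k l : ℕ} (h : A * Q ^ (k + l) = 1) (z w : ι → B) :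
    termNum Q A z w (k + l) k =
      (Q ^ l - Q ^ k) * ∏ i, pairNum Q A (z i) (w i) (k + l) k := by
  rw [termNum, Nat.add_sub_cancel_left]
  linear_combination (-Q ^ k * ∏ i, pairNum Q A (z i) (w i) (k + l) k) * h

lemma termNum_add_termNum_of_mul_pow_eq_one {Q A : B} {k l : ℕ} (h : A * Q ^ (k + l) = 1)
    (z w : ι → B) : termNum Q A z w (k + l) k + termNum Q A z w (k + l) l = 0 := by
  have swapped := termNum_eq_of_mul_pow_eq_one (k := l) (l := k) (by rwa [add_comm]) z w
  rw [add_comm l k] at swapped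
  simp_rw [swapped, termNum_eq_of_mul_pow_eq_one h, pairNum_comm_of_mul_pow_eq_one h]
  ring

theorem sum_termNum_eq_zero_of_mul_pow_eq_one {Q A : B} {N : ℕ} (h : A * Q ^ N = 1)
    (z w : ι → B) : ∑ k ∈ range (N + 1), termNum Q A z w N k = 0 := by
  refine sum_involution (fun k _ ↦ N - k) (fun k hk ↦ ?_) (fun k hk hne heq ↦ hne ?_)
    (fun _ _ ↦ mem_range.2 (by omega)) fun k hk ↦ by have := mem_range.1 hk; omega
  all_goals
    have hkN : k ≤ N := Nat.le_of_lt_succ (mem_range.1 hk)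
    obtain ⟨l, rfl⟩ := Nat.exists_eq_add_of_le hkN
    rw [Nat.add_sub_cancel_left] at *
  · exact termNum_add_termNum_of_mul_pow_eq_one h z w
  · rw [termNum_eq_of_mul_pow_eq_one h, heq, sub_self, zero_mul]

theorem sub_dvd_sum_termNum {Q c : B} {N : ℕ} (h : c * Q ^ N = 1) (A : B) (z w : ι → B) :
    A - c ∣ ∑ k ∈ range (N + 1), termNum Q A z w N k := by
  have := Polynomial.sub_dvd_eval_sub A c (∑ k ∈ range (N + 1),
    termNum (.C Q) .X (fun i ↦ .C (z i)) (fun i ↦ .C (w i)) N k)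
  simpa only [eval_sum_termNum, Polynomial.eval_C, Polynomial.eval_X,
    sum_termNum_eq_zero_of_mul_pow_eq_one h, sub_zero] using this

lemma sub_mul_sub_dvd_eval [IsDomain B] {P : Polynomial B} {c y : B} (hc : P.IsRoot c)
    (hy : P.IsRoot y) (hcy : y ≠ c) (x : B) : (x - c) * (x - y) ∣ P.eval x := by
  obtain ⟨P', rfl⟩ := Polynomial.dvd_iff_isRoot.2 hc
  have hy' : P'.IsRoot y := by simpa [sub_ne_zero.2 hcy] using hy
  obtain ⟨P'', rfl⟩ := Polynomial.dvd_iff_isRoot.2 hy'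
  exact ⟨P''.eval x, by simp [mul_assoc]⟩

end ClearedTerm

section Interpolation

variable {F ι : Type*} [Field F] [Fintype ι] {Q : F}

/-- The interpolation nodes `Q ^ (-k) + A Q ^ k` of a very-well-poised series: in the lattice
variable `node Q A k` its terms are a Lagrange weight times a polynomial. -/
def node (Q A : F) (k : ℕ) : F := (Q ^ k)⁻¹ + A * Q ^ k

lemma node_sub_node_of_le (hQ : Q ≠ 0) (A : F) {j k : ℕ} (h : j ≤ k) :
    (node Q A k - node Q A j) * Q ^ k = (1 - Q ^ (k - j)) * (1 - A * Q ^ (k + j)) := by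
  obtain ⟨l, rfl⟩ := Nat.exists_eq_add_of_le h
  rw [node, node, Nat.add_sub_cancel_left]
  field_simp
  ring

lemma node_injective (hQ : Q ≠ 0) (hQpow : ∀ j ≠ 0, Q ^ j ≠ 1) {A : F}
    (hA : ∀ j, A * Q ^ j ≠ 1) : Function.Injective (node Q A) := by
  refine Function.Injective.of_lt_imp_ne fun j k hjk heq ↦ ?_
  have product_zero := node_sub_node_of_le hQ A hjk.le
  rw [heq, sub_self, zero_mul, eq_comm, mul_eq_zero] at product_zero
  rcases product_zero with h | h
  · exact hQpow (k - j) (by omega) (sub_eq_zero.1 h).symm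
  · exact hA (k + j) (sub_eq_zero.1 h).symm

lemma prod_range_erase {M : Type*} [CommMonoid M] (f : ℕ → M) (k l : ℕ) :
    ∏ j ∈ (range (k + l + 1)).erase k, f j =
      (∏ j ∈ range k, f j) * ∏ j ∈ range l, f (k + 1 + j) := by
  have union : (range (k + l + 1)).erase k = range k ∪ Ico (k + 1) (k + l + 1) := by
    ext j; simp only [mem_erase, mem_range, mem_union, mem_Ico]; omega
  have disjoint : Disjoint (range k) (Ico (k + 1) (k + l + 1)) := by
    rw [disjoint_left]; intro j; simp only [mem_range, mem_Ico]; omega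
  rw [union, prod_union disjoint, prod_Ico_eq_prod_range f (k + 1),
    show k + l + 1 - (k + 1) = l by omega]

lemma prod_range_one_sub_pow_sub (Q : F) (k l : ℕ) :
    ∏ j ∈ range k, (1 - Q ^ (k + l - j)) = ∏ j ∈ range k, (1 - Q ^ (l + j + 1)) := by
  rw [← prod_range_reflect]
  refine prod_congr rfl fun j hj ↦ ?_
  rw [show k + l - (k - 1 - j) = l + j + 1 by have := mem_range.1 hj; omega]

lemma prod_node_sub_node_below (hQ : Q ≠ 0) (A : F) (k : ℕ) :
    (∏ j ∈ range k, (node Q A k - node Q A j)) * (Q ^ k) ^ k =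
      (∏ j ∈ range k, (1 - Q ^ (j + 1))) * ∏ j ∈ range k, (1 - A * Q ^ (k + j)) := by
  have reflect := prod_range_one_sub_pow_sub Q k 0
  simp only [add_zero, zero_add] at reflect
  rw [← reflect, ← prod_mul_distrib, prod_congr rfl fun j hj ↦
    (node_sub_node_of_le hQ A (mem_range.1 hj).le).symm, prod_mul_distrib, prod_const, card_range]

lemma prod_node_sub_node_above (hQ : Q ≠ 0) (A : F) (k l : ℕ) :
    (∏ j ∈ range l, (node Q A k - node Q A (k + 1 + j))) * ∏ j ∈ range l, -Q ^ (k + 1 + j) =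
      (∏ j ∈ range l, (1 - Q ^ (j + 1))) * ∏ j ∈ range l, (1 - A * Q ^ (2 * k + 1 + j)) := by
  rw [← prod_mul_distrib, ← prod_mul_distrib]
  refine prod_congr rfl fun j _ ↦ ?_
  have difference := node_sub_node_of_le hQ A (show k ≤ k + 1 + j by omega)
  rw [show k + 1 + j - k = j + 1 by omega, show k + 1 + j + k = 2 * k + 1 + j by ring] at difference
  rw [← difference]
  ring

lemma prod_range_mul_pow_sub_mul_pow (Q A : F) (k l : ℕ) :
    ∏ j ∈ range k, (A * Q ^ (k + l) - A * Q ^ j) =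
      (∏ j ∈ range k, -(A * Q ^ j)) * ∏ j ∈ range k, (1 - Q ^ (l + j + 1)) := by
  rw [← prod_range_one_sub_pow_sub, ← prod_mul_distrib]
  refine prod_congr rfl fun j hj ↦ ?_
  have split : Q ^ (k + l) = Q ^ j * Q ^ (k + l - j) := by
    rw [← pow_add, Nat.add_sub_cancel' (by have := mem_range.1 hj; omega)]
  rw [split]
  ring

lemma pow_mul_prod_neg_eq (Q A : F) (k l : ℕ) :
    Q ^ (k + l) * A ^ l * (∏ j ∈ range k, -(A * Q ^ j)) * Q ^ (k + l).choose 2 =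
      (-A) ^ (k + l) * ((Q ^ k) ^ k * ∏ j ∈ range l, -Q ^ (k + 1 + j)) := by
  have below : ∏ j ∈ range k, -(A * Q ^ j) = (-A) ^ k * Q ^ k.choose 2 := by
    simp only [← neg_mul, prod_mul_distrib, prod_pow_eq_pow_choose_two, prod_const, card_range]
  have above : ∏ j ∈ range l, -Q ^ (k + 1 + j) = (-1) ^ l * Q ^ ((k + 1) * l + l.choose 2) := by
    simp only [pow_add _ (k + 1), neg_mul_eq_neg_mul, prod_mul_distrib, prod_pow_eq_pow_choose_two,
      prod_const, card_range]
    ring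
  have exponent : k + l + k.choose 2 + (k + l).choose 2 = k * k + ((k + 1) * l + l.choose 2) := by
    linarith [choose_two_mul_two_add_self k, choose_two_mul_two_add_self l,
      choose_two_mul_two_add_self (k + l)]
  calc _ = (-A) ^ k * A ^ l * Q ^ (k + l + k.choose 2 + (k + l).choose 2) := by rw [below]; ring
    _ = (-A) ^ k * (-A) ^ l * (-1) ^ l * Q ^ (k * k + ((k + 1) * l + l.choose 2)) := by
      rw [exponent, mul_assoc _ ((-A) ^ l), ← mul_pow, neg_mul_neg, mul_one]
    _ = _ := by rw [above]; ring

/-- The weight that the pair of parameters `1, A Q ^ N` gives to the `k`-th term. -/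
def weight (Q A : F) (N k : ℕ) : F :=
  (1 - A * Q ^ (2 * k)) * Q ^ (N - k) * pairNum Q A 1 (A * Q ^ N) N k

lemma prod_range_concat {M : Type*} [CommMonoid M] (f : ℕ → M) (k l : ℕ) :
    (∏ j ∈ range k, f j) * (∏ j ∈ range k, f (k + j)) * f (2 * k) *
        (∏ j ∈ range l, f (2 * k + 1 + j)) * ∏ j ∈ range l, f (2 * k + 1 + l + j) =
      ∏ j ∈ range (2 * (k + l) + 1), f j := by
  rw [show 2 * (k + l) + 1 = k + k + 1 + l + l by ring, prod_range_add, prod_range_add,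
    prod_range_succ, prod_range_add, two_mul]

lemma weight_add_eq (Q A : F) (k l : ℕ) :
    weight Q A (k + l) k =
      (Q ^ (k + l) * A ^ l * ∏ j ∈ range k, -(A * Q ^ j)) *
        ((∏ j ∈ range k, (1 - A * Q ^ j)) * (1 - A * Q ^ (2 * k)) *
          ∏ j ∈ range l, (1 - A * Q ^ (2 * k + 1 + l + j))) *
        ((∏ j ∈ range l, (1 - Q ^ (k + j + 1))) * ∏ j ∈ range k, (1 - Q ^ (l + j + 1))) := by
  have tail : ∏ j ∈ range l, (1 - A * Q ^ (k + l) * Q ^ (k + j + 1)) =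
      ∏ j ∈ range l, (1 - A * Q ^ (2 * k + 1 + l + j)) :=
    prod_congr rfl fun j _ ↦ by ring
  simp only [weight, pairNum, prod_mul_distrib, prod_Ico_eq_prod_range, Nat.add_sub_cancel_left,
    tail, prod_range_mul_pow_sub_mul_pow, one_mul]
  ring

lemma prod_erase_node_sub_node (hQ : Q ≠ 0) (A : F) (k l : ℕ) :
    (∏ j ∈ (range (k + l + 1)).erase k, (node Q A k - node Q A j)) *
        ((Q ^ k) ^ k * ∏ j ∈ range l, -Q ^ (k + 1 + j)) =
      (∏ j ∈ range k, (1 - Q ^ (j + 1))) * (∏ j ∈ range l, (1 - Q ^ (j + 1))) *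
        ((∏ j ∈ range k, (1 - A * Q ^ (k + j))) *
          ∏ j ∈ range l, (1 - A * Q ^ (2 * k + 1 + j))) := by
  rw [prod_range_erase, mul_mul_mul_comm, prod_node_sub_node_below hQ,
    prod_node_sub_node_above hQ, mul_mul_mul_comm]

lemma weight_mul_prod_node_sub_node (hQ : Q ≠ 0) (A : F) {N k : ℕ} (hk : k ≤ N) :
    weight Q A N k * (∏ j ∈ (range (N + 1)).erase k, (node Q A k - node Q A j)) *
        Q ^ N.choose 2 =
      (-A) ^ N * (∏ j ∈ range (2 * N + 1), (1 - A * Q ^ j)) *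
        (∏ j ∈ range N, (1 - Q ^ (j + 1))) ^ 2 := by
  obtain ⟨l, rfl⟩ := Nat.exists_eq_add_of_le hk
  have factorial_split := prod_range_add (fun j ↦ 1 - Q ^ (j + 1)) k l
  have factorial_split' := prod_range_add (fun j ↦ 1 - Q ^ (j + 1)) l k
  rw [add_comm l k] at factorial_split'
  have scalars_ne_zero : (Q ^ k) ^ k * ∏ j ∈ range l, -Q ^ (k + 1 + j) ≠ 0 :=
    mul_ne_zero (pow_ne_zero _ (pow_ne_zero _ hQ))
      (prod_ne_zero_iff.2 fun j _ ↦ neg_ne_zero.2 (pow_ne_zero _ hQ))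
  refine mul_right_cancel₀ scalars_ne_zero ?_
  calc _ = (Q ^ (k + l) * A ^ l * (∏ j ∈ range k, -(A * Q ^ j)) * Q ^ (k + l).choose 2) *
        ((∏ j ∈ range k, (1 - A * Q ^ j)) * (1 - A * Q ^ (2 * k)) *
          ∏ j ∈ range l, (1 - A * Q ^ (2 * k + 1 + l + j))) *
        ((∏ j ∈ range l, (1 - Q ^ (k + j + 1))) * ∏ j ∈ range k, (1 - Q ^ (l + j + 1))) *
        ((∏ j ∈ (range (k + l + 1)).erase k, (node Q A k - node Q A j)) *
          ((Q ^ k) ^ k * ∏ j ∈ range l, -Q ^ (k + 1 + j))) := by rw [weight_add_eq]; ring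
    _ = _ := by
      rw [pow_mul_prod_neg_eq, prod_erase_node_sub_node hQ, sq,
        ← prod_range_concat (fun j ↦ 1 - A * Q ^ j)]
      nth_rw 1 [factorial_split]
      rw [factorial_split']
      ring

theorem sum_weight_mul_eval_node (hQ : Q ≠ 0) (hQpow : ∀ j ≠ 0, Q ^ j ≠ 1) {A : F}
    (hA : ∀ j, A * Q ^ j ≠ 1) {N : ℕ} {P : Polynomial F} (hP : P.natDegree < N) :
    ∑ k ∈ range (N + 1), weight Q A N k * P.eval (node Q A k) = 0 := by
  have inj : Set.InjOn (node Q A) (range (N + 1)) := (node_injective hQ hQpow hA).injOn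
  have degree_lt : P.degree < #(range (N + 1)) := by
    rw [card_range]
    exact Polynomial.degree_le_natDegree.trans_lt (by exact_mod_cast hP.trans N.lt_succ_self)
  have interpolation := Lagrange.coeff_eq_sum inj degree_lt
  rw [card_range, Nat.add_sub_cancel, Polynomial.coeff_eq_zero_of_natDegree_lt hP] at interpolation
  set c : F := (-A) ^ N * (∏ j ∈ range (2 * N + 1), (1 - A * Q ^ j)) *
    (∏ j ∈ range N, (1 - Q ^ (j + 1))) ^ 2 / Q ^ N.choose 2 with hc
  have weight_eq (k) (hk : k ∈ range (N + 1)) :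
      weight Q A N k = c / ∏ j ∈ (range (N + 1)).erase k, (node Q A k - node Q A j) := by
    have nodes_ne_zero : ∏ j ∈ (range (N + 1)).erase k, (node Q A k - node Q A j) ≠ 0 :=
      prod_ne_zero_iff.2 fun j hj ↦
        sub_ne_zero.2 ((node_injective hQ hQpow hA).ne (ne_of_mem_erase hj).symm)
    rw [eq_div_iff nodes_ne_zero, hc, eq_div_iff (pow_ne_zero _ hQ),
      weight_mul_prod_node_sub_node hQ A (Nat.le_of_lt_succ (mem_range.1 hk))]
  calc _ = c * ∑ k ∈ range (N + 1), P.eval (node Q A k) /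
        ∏ j ∈ (range (N + 1)).erase k, (node Q A k - node Q A j) := by
        rw [mul_sum]
        exact sum_congr rfl fun k hk ↦ by rw [weight_eq k hk, div_mul_eq_mul_div, mul_div_assoc]
    _ = 0 := by rw [← interpolation, mul_zero]

lemma prod_Ico_mul_prod_Ico_exchange {M : Type*} [CommMonoid M] (f : ℕ → M) {s k N : ℕ}
    (hs : s ≤ N) (hk : k ≤ N) :
    (∏ j ∈ Ico s (s + k), f j) * ∏ j ∈ Ico k N, f j =
      (∏ j ∈ Ico s N, f j) * ∏ j ∈ Ico k (k + s), f j := by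
  rcases le_total N (s + k) with h | h
  · rw [← prod_Ico_consecutive f hs h, ← prod_Ico_consecutive f hk (show N ≤ k + s by omega),
      add_comm k s, mul_assoc, mul_comm (∏ j ∈ Ico N _, f j)]
  · rw [← prod_Ico_consecutive f (Nat.le_add_right s k) h,
      ← prod_Ico_consecutive f (Nat.le_add_right k s) (show k + s ≤ N by omega), add_comm k s,
      mul_assoc, mul_comm (∏ j ∈ Ico k _, f j)]

/-- The polynomial in the lattice variable that the parameter pair `u, u⁻¹` contributes when
the leading parameter is `Q ^ (s + 1)`. -/
def pairPoly (Q u : F) (s : ℕ) : Polynomial F :=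
  ∏ i ∈ range s, (.X - .C (u * Q ^ (i + 1) + u⁻¹ * Q ^ (s - i)))

lemma natDegree_pairPoly (Q u : F) (s : ℕ) : (pairPoly Q u s).natDegree = s := by
  rw [pairPoly, Polynomial.natDegree_finsetProd_X_sub_C_eq_card, card_range]

lemma prod_Ico_one_sub_mul_pow_eq (hQ : Q ≠ 0) {u : F} (hu : u ≠ 0) (s k : ℕ) :
    ∏ j ∈ Ico k (k + s), (1 - u * Q ^ (j + 1)) * (1 - u⁻¹ * Q ^ (j + 1)) =
      (Q ^ k) ^ s * (pairPoly Q u s).eval (node Q (Q ^ (s + 1)) k) := by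
  have reflect : ∏ j ∈ range s, (1 - u⁻¹ * Q ^ (k + j + 1)) =
      ∏ j ∈ range s, (1 - u⁻¹ * (Q ^ k * Q ^ (s - j))) := by
    rw [← prod_range_reflect]
    refine prod_congr rfl fun j hj ↦ ?_
    rw [← pow_add, show k + (s - 1 - j) + 1 = k + (s - j) by have := mem_range.1 hj; omega]
  have scalars : (Q ^ k) ^ s = ∏ _j ∈ range s, Q ^ k := by rw [prod_const, card_range]
  rw [prod_Ico_eq_prod_range, Nat.add_sub_cancel_left, prod_mul_distrib, reflect, pairPoly,
    Polynomial.eval_prod, scalars, ← prod_mul_distrib, ← prod_mul_distrib]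
  refine prod_congr rfl fun i hi ↦ ?_
  have split : Q ^ (s + 1) = Q ^ (i + 1) * Q ^ (s - i) := by
    rw [← pow_add, show i + 1 + (s - i) = s + 1 by have := mem_range.1 hi; omega]
  simp only [Polynomial.eval_sub, Polynomial.eval_X, Polynomial.eval_C, node, split]
  field_simp
  ring

lemma pairNum_inv_eq (hQ : Q ≠ 0) {u : F} (hu : u ≠ 0) {s k N : ℕ} (hs : s ≤ N) (hk : k ≤ N) :
    pairNum Q (Q ^ (s + 1)) u u⁻¹ N k =
      ((Q ^ (s + 1)) ^ N * ∏ j ∈ Ico s N, (1 - u * Q ^ (j + 1)) * (1 - u⁻¹ * Q ^ (j + 1))) *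
        (pairPoly Q u s).eval (node Q (Q ^ (s + 1)) k) := by
  have numerator : ∏ j ∈ range k, (u - Q ^ (s + 1) * Q ^ j) * (u⁻¹ - Q ^ (s + 1) * Q ^ j) =
      ∏ j ∈ Ico s (s + k), (1 - u * Q ^ (j + 1)) * (1 - u⁻¹ * Q ^ (j + 1)) := by
    rw [prod_Ico_eq_prod_range, Nat.add_sub_cancel_left]
    refine prod_congr rfl fun j _ ↦ ?_
    field_simp
    ring
  have scalars : Q ^ k * (Q ^ (s + 1)) ^ (N - k) * (Q ^ k) ^ s = (Q ^ (s + 1)) ^ N := by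
    rw [← Nat.sub_add_cancel hk, Nat.add_sub_cancel]
    ring
  rw [pairNum, numerator, mul_assoc, prod_Ico_mul_prod_Ico_exchange _ hs hk,
    prod_Ico_one_sub_mul_pow_eq hQ hu, ← scalars]
  ring

theorem sum_termNum_pow_succ_eq_zero (hQ : Q ≠ 0) (hQpow : ∀ j ≠ 0, Q ^ j ≠ 1) {u : ι → F}
    (hu : ∀ i, u i ≠ 0) {s N : ℕ} (hN : Fintype.card ι * s < N) :
    ∑ k ∈ range (N + 1), termNum Q (Q ^ (s + 1)) (fun o : Option ι ↦ o.elim 1 u)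
      (fun o ↦ o.elim (Q ^ (s + 1) * Q ^ N) fun i ↦ (u i)⁻¹) N k = 0 := by
  have hs (i : ι) : s ≤ N :=
    (Nat.le_mul_of_pos_left s (Fintype.card_pos_iff.2 ⟨i⟩)).trans hN.le
  have degree_lt : (∏ i, pairPoly Q (u i) s).natDegree < N :=
    (Polynomial.natDegree_prod_le _ _).trans_lt (by simpa [natDegree_pairPoly] using hN)
  have hA (j) : Q ^ (s + 1) * Q ^ j ≠ 1 := by rw [← pow_add]; exact hQpow _ (by omega)
  have vanishing := sum_weight_mul_eval_node hQ hQpow hA degree_lt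
  set c : F := ∏ i, ((Q ^ (s + 1)) ^ N *
    ∏ j ∈ Ico s N, (1 - u i * Q ^ (j + 1)) * (1 - (u i)⁻¹ * Q ^ (j + 1))) with hc
  calc _ = ∑ k ∈ range (N + 1), c * (weight Q (Q ^ (s + 1)) N k *
        (∏ i, pairPoly Q (u i) s).eval (node Q (Q ^ (s + 1)) k)) := by
        refine sum_congr rfl fun k hk ↦ ?_
        have hkN : k ≤ N := Nat.le_of_lt_succ (mem_range.1 hk)
        have pairs : ∏ i, pairNum Q (Q ^ (s + 1)) (u i) (u i)⁻¹ N k =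
            c * (∏ i, pairPoly Q (u i) s).eval (node Q (Q ^ (s + 1)) k) := by
          rw [Polynomial.eval_prod, hc, ← prod_mul_distrib]
          exact prod_congr rfl fun i _ ↦ pairNum_inv_eq hQ (hu i) (hs i) hkN
        simp only [termNum, Fintype.prod_option, Option.elim, pairs, weight]
        ring
    _ = 0 := by rw [← mul_sum, vanishing, mul_zero]

end Interpolation

section Term

variable {F ι : Type*} [Field F] [Fintype ι]

/-- The contribution of the parameter pair `z, w` to the `k`-th term of the very-well-poised series
with base `Q` and leading parameter `A`. The exponents of `Q` and `A` are such that the shifted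
factorials `(A / z; Q)_k (A / w; Q)_k / ((z Q; Q)_k (w Q; Q)_k)` are multiplied by
`(Q z w / A) ^ k`. -/
def pairTerm (Q A z w : F) (k : ℕ) : F :=
  ∏ j ∈ range k, Q * ((z - A * Q ^ j) * (w - A * Q ^ j)) /
    (A * ((1 - z * Q ^ (j + 1)) * (1 - w * Q ^ (j + 1))))

/-- The `k`-th term of the very-well-poised series without its factor `1 - A Q ^ (2 k)`. -/
def coeff (Q A : F) (z w : ι → F) (k : ℕ) : F := (∏ i, pairTerm Q A (z i) (w i) k) / Q ^ k

/-- The `k`-th term of the very-well-poised series with base `Q`, leading parameter `A` and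
parameter pairs `z i, w i`. -/
def term (Q A : F) (z w : ι → F) (k : ℕ) : F := (1 - A * Q ^ (2 * k)) * coeff Q A z w k

lemma pairTerm_eq_div (Q A z w : F) (k : ℕ) :
    pairTerm Q A z w k = Q ^ k * (∏ j ∈ range k, (z - A * Q ^ j) * (w - A * Q ^ j)) /
      (A ^ k * ∏ j ∈ range k, (1 - z * Q ^ (j + 1)) * (1 - w * Q ^ (j + 1))) := by
  simp only [pairTerm, prod_div_distrib, prod_mul_distrib, prod_const, card_range]

lemma pairTerm_add {Q : F} (hQ : Q ≠ 0) (A z w : F) (l k : ℕ) :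
    pairTerm Q A z w (l + k) =
      pairTerm Q A z w l * pairTerm Q (A * Q ^ (2 * l)) (z * Q ^ l) (w * Q ^ l) k := by
  rw [pairTerm, prod_range_add]
  refine congrArg _ (prod_congr rfl fun j _ ↦ ?_)
  have numerator : Q * ((z * Q ^ l - A * Q ^ (2 * l) * Q ^ j) *
        (w * Q ^ l - A * Q ^ (2 * l) * Q ^ j)) =
      Q * ((z - A * Q ^ (l + j)) * (w - A * Q ^ (l + j))) * Q ^ (2 * l) := by ring
  have denominator : A * Q ^ (2 * l) * ((1 - z * Q ^ l * Q ^ (j + 1)) *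
        (1 - w * Q ^ l * Q ^ (j + 1))) =
      A * ((1 - z * Q ^ (l + j + 1)) * (1 - w * Q ^ (l + j + 1))) * Q ^ (2 * l) := by ring
  rw [numerator, denominator, mul_div_mul_right _ _ (pow_ne_zero _ hQ)]

lemma coeff_add {Q : F} (hQ : Q ≠ 0) (A : F) (z w : ι → F) (l k : ℕ) :
    coeff Q A z w (l + k) = coeff Q A z w l *
      coeff Q (A * Q ^ (2 * l)) (fun i ↦ z i * Q ^ l) (fun i ↦ w i * Q ^ l) k := by
  simp only [coeff, pairTerm_add hQ, prod_mul_distrib, pow_add, div_mul_div_comm]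

lemma term_add {Q : F} (hQ : Q ≠ 0) (A : F) (z w : ι → F) (l k : ℕ) :
    term Q A z w (l + k) = coeff Q A z w l *
      term Q (A * Q ^ (2 * l)) (fun i ↦ z i * Q ^ l) (fun i ↦ w i * Q ^ l) k := by
  rw [term, term, coeff_add hQ]
  ring

lemma pairTerm_mul_eq_pairNum {Q A z w : F} (hA : A ≠ 0) {N k : ℕ} (hk : k ≤ N)
    (hden : ∏ j ∈ range N, (1 - z * Q ^ (j + 1)) * (1 - w * Q ^ (j + 1)) ≠ 0) :
    pairTerm Q A z w k *
        (A ^ N * ∏ j ∈ range N, (1 - z * Q ^ (j + 1)) * (1 - w * Q ^ (j + 1))) =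
      pairNum Q A z w N k := by
  have split := prod_range_mul_prod_Ico (fun j ↦ (1 - z * Q ^ (j + 1)) * (1 - w * Q ^ (j + 1))) hk
  have hden' : ∏ j ∈ range k, (1 - z * Q ^ (j + 1)) * (1 - w * Q ^ (j + 1)) ≠ 0 :=
    left_ne_zero_of_mul (split ▸ hden)
  rw [pairTerm_eq_div, pairNum, ← split, ← pow_mul_pow_sub A hk]
  field_simp

lemma term_mul_eq_termNum {Q A : F} {z w : ι → F} (hQ : Q ≠ 0) (hA : A ≠ 0) {N k : ℕ} (hk : k ≤ N)
    (hden : ∀ i, ∏ j ∈ range N, (1 - z i * Q ^ (j + 1)) * (1 - w i * Q ^ (j + 1)) ≠ 0) :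
    term Q A z w k * (Q ^ N *
        ∏ i, A ^ N * ∏ j ∈ range N, (1 - z i * Q ^ (j + 1)) * (1 - w i * Q ^ (j + 1))) =
      termNum Q A z w N k := by
  have pairs : ∏ i, pairNum Q A (z i) (w i) N k = (∏ i, pairTerm Q A (z i) (w i) k) *
      ∏ i, A ^ N * ∏ j ∈ range N, (1 - z i * Q ^ (j + 1)) * (1 - w i * Q ^ (j + 1)) := by
    rw [← prod_mul_distrib]
    exact prod_congr rfl fun i _ ↦ (pairTerm_mul_eq_pairNum hA hk (hden i)).symm
  have cancel : (Q ^ k)⁻¹ * Q ^ N = Q ^ (N - k) := by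
    rw [← pow_mul_pow_sub Q hk, inv_mul_cancel_left₀ (pow_ne_zero k hQ)]
  rw [termNum, pairs, term, coeff, ← cancel]
  ring

end Term

section Valuation

variable {F ι Γ₀ : Type*} [Field F] [Fintype ι] [LinearOrderedCommGroupWithZero Γ₀]
  {v : Valuation F Γ₀} {Q A z w : F} {N k : ℕ}

/-- The parameters `z, w` are `v`-integral and the denominators they contribute to the terms of
index at most `n` are `v`-units. -/
structure IsIntegralPair (v : Valuation F Γ₀) (Q z w : F) (n : ℕ) : Prop where
  left_le_one : v z ≤ 1
  right_le_one : v w ≤ 1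
  left_den : ∀ j < n, v (1 - z * Q ^ (j + 1)) = 1
  right_den : ∀ j < n, v (1 - w * Q ^ (j + 1)) = 1

lemma IsIntegralPair.mono (h : IsIntegralPair v Q z w N) (hk : k ≤ N) :
    IsIntegralPair v Q z w k where
  left_le_one := h.left_le_one
  right_le_one := h.right_le_one
  left_den j hj := h.left_den j (hj.trans_le hk)
  right_den j hj := h.right_den j (hj.trans_le hk)

lemma IsIntegralPair.map_prod_den (h : IsIntegralPair v Q z w N) :
    v (∏ j ∈ range N, (1 - z * Q ^ (j + 1)) * (1 - w * Q ^ (j + 1))) = 1 := by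
  rw [map_prod]
  refine prod_eq_one fun j hj ↦ ?_
  rw [map_mul, h.left_den j (mem_range.1 hj), h.right_den j (mem_range.1 hj), one_mul]

lemma ne_zero_of_map_eq_one {x : F} (h : v x = 1) : x ≠ 0 :=
  v.ne_zero_iff.1 (h ▸ one_ne_zero)

lemma map_one_sub_mul_pow (hQ : v Q = 1) (A : F) (N : ℕ) :
    v (1 - A * Q ^ N) = v (A - (Q ^ N)⁻¹) := by
  have hQN : Q ^ N ≠ 0 := pow_ne_zero N (ne_zero_of_map_eq_one hQ)
  rw [v.map_sub_swap 1, show A * Q ^ N - 1 = (A - (Q ^ N)⁻¹) * Q ^ N by field_simp,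
    map_mul, map_pow, hQ, one_pow, mul_one]

lemma map_sum_term_eq_map_sum_termNum (hQ : v Q = 1) (hA : v A = 1) {z w : ι → F}
    (h : ∀ i, IsIntegralPair v Q (z i) (w i) N) :
    v (∑ k ∈ range (N + 1), term Q A z w k) = v (∑ k ∈ range (N + 1), termNum Q A z w N k) := by
  have hC : v (Q ^ N *
      ∏ i, A ^ N * ∏ j ∈ range N, (1 - z i * Q ^ (j + 1)) * (1 - w i * Q ^ (j + 1))) = 1 := by
    rw [map_mul, map_pow, hQ, one_pow, one_mul, map_prod]
    exact prod_eq_one fun i _ ↦ by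
      rw [map_mul, map_pow, hA, one_pow, one_mul, (h i).map_prod_den]
  rw [← mul_one (v _), ← hC, ← map_mul, sum_mul]
  exact congrArg v (sum_congr rfl fun k hk ↦ term_mul_eq_termNum (ne_zero_of_map_eq_one hQ)
    (ne_zero_of_map_eq_one hA) (Nat.le_of_lt_succ (mem_range.1 hk))
    fun i ↦ ne_zero_of_map_eq_one (h i).map_prod_den)

lemma coe_sum_termNum (Q A : v.integer) (z w : ι → v.integer) (N : ℕ) :
    ((∑ k ∈ range (N + 1), termNum Q A z w N k : v.integer) : F) =
      ∑ k ∈ range (N + 1), termNum (Q : F) A (fun i ↦ z i) (fun i ↦ w i) N k :=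
  (map_sum v.integer.subtype _ _).trans
    (sum_congr rfl fun k _ ↦ map_termNum v.integer.subtype Q A z w N k)

theorem map_sum_term_le_map_one_sub_mul_pow (hQ : v Q = 1) (hA : v A = 1) {z w : ι → F}
    (h : ∀ i, IsIntegralPair v Q (z i) (w i) N) :
    v (∑ k ∈ range (N + 1), term Q A z w k) ≤ v (1 - A * Q ^ N) := by
  let Q' : v.integer := ⟨Q, hQ.le⟩
  let c : v.integer := ⟨(Q ^ N)⁻¹, by simp [Valuation.mem_integer_iff, hQ]⟩
  have hQN : Q ^ N ≠ 0 := pow_ne_zero N (ne_zero_of_map_eq_one hQ)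
  have dvd := sub_dvd_sum_termNum (Q := Q') (c := c) (N := N)
    (Subtype.ext (inv_mul_cancel₀ hQN)) ⟨A, hA.le⟩
    (fun i ↦ ⟨z i, (h i).left_le_one⟩) (fun i ↦ ⟨w i, (h i).right_le_one⟩)
  have le := (Valuation.integer.integers v).le_of_dvd dvd
  calc _ = v (∑ k ∈ range (N + 1), termNum Q A z w N k) :=
        map_sum_term_eq_map_sum_termNum hQ hA h
    _ ≤ v (A - (Q ^ N)⁻¹) := (congrArg v (coe_sum_termNum _ _ _ _ N)).ge.trans le
    _ = v (1 - A * Q ^ N) := (map_one_sub_mul_pow hQ A N).symm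

theorem map_sum_termNum_le_mul {Q A c y : v.integer} {z w : ι → Polynomial v.integer}
    (hc : c * Q ^ N = 1) (hyc : y ≠ c)
    (hy : ∑ k ∈ range (N + 1), termNum (Q : F) y (fun i ↦ ((z i).eval y : v.integer))
      (fun i ↦ ((w i).eval y : v.integer)) N k = 0) :
    v (∑ k ∈ range (N + 1), termNum (Q : F) A (fun i ↦ ((z i).eval A : v.integer))
      (fun i ↦ ((w i).eval A : v.integer)) N k) ≤ v (A - c) * v (A - y) := by
  rw [← coe_sum_termNum, ← map_mul]
  rw [← coe_sum_termNum, ZeroMemClass.coe_eq_zero] at hy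
  have eval_eq (x : v.integer) := eval_sum_termNum (.C Q) .X z w N x
  simp only [Polynomial.eval_C, Polynomial.eval_X] at eval_eq
  refine (Valuation.integer.integers v).le_of_dvd (x := (A - c) * (A - y)) ?_
  rw [← eval_eq]
  exact sub_mul_sub_dvd_eval ((eval_eq c).trans (sum_termNum_eq_zero_of_mul_pow_eq_one hc _ _))
    ((eval_eq y).trans hy) hyc A

/-- The numerator is a polynomial in the leading parameter once the second parameters are made
affine functions of it, so two distinct zeros `(Q ^ N)⁻¹` and `y` give two linear factors. -/
theorem map_sum_termNum_le_of_deformation (hQ : v Q = 1) (hA : v A ≤ 1) {y : F} (hy : v y ≤ 1)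
    (hyN : y * Q ^ N ≠ 1) {z w κ : ι → F} (hz : ∀ i, v (z i) ≤ 1) (hw : ∀ i, v (w i) ≤ 1)
    (hκ : ∀ i, v (κ i) ≤ 1)
    (root : ∑ k ∈ range (N + 1), termNum Q y z (fun i ↦ w i + κ i * (y - A)) N k = 0) :
    v (∑ k ∈ range (N + 1), termNum Q A z w N k) ≤ v (1 - A * Q ^ N) * v (A - y) := by
  have hQN : Q ^ N ≠ 0 := pow_ne_zero N (ne_zero_of_map_eq_one hQ)
  let A' : v.integer := ⟨A, hA⟩
  have bound := map_sum_termNum_le_mul (Q := ⟨Q, hQ.le⟩) (A := A') (y := ⟨y, hy⟩)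
    (c := ⟨(Q ^ N)⁻¹, by simp [Valuation.mem_integer_iff, hQ]⟩)
    (z := fun i ↦ .C ⟨z i, hz i⟩)
    (w := fun i ↦ .C ⟨w i, hw i⟩ + .C ⟨κ i, hκ i⟩ * (.X - .C A'))
    (Subtype.ext (inv_mul_cancel₀ hQN))
    (fun h ↦ hyN (by rw [show y = (Q ^ N)⁻¹ from congrArg Subtype.val h, inv_mul_cancel₀ hQN]))
    (by simpa [A'] using root)
  simpa [A', ← map_one_sub_mul_pow hQ] using bound

lemma map_sub_mul_pow_le_one (hQ : v Q = 1) (hA : v A = 1) {x : F} (hx : v x ≤ 1) (j : ℕ) :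
    v (x - A * Q ^ j) ≤ 1 :=
  v.map_sub_le hx (by rw [map_mul, map_pow, hA, hQ, one_pow, one_mul])

lemma map_prod_num_le (hQ : v Q = 1) (hA : v A = 1) (hz : v z ≤ 1) (hw : v w ≤ 1) (hN : N < k) :
    v (∏ j ∈ range k, (z - A * Q ^ j) * (w - A * Q ^ j)) ≤
      v (z - A * Q ^ N) * v (w - A * Q ^ N) := by
  rw [map_prod, ← mul_prod_erase _ _ (mem_range.2 hN), map_mul]
  refine mul_le_of_le_one_right' (prod_le_one' fun j _ ↦ ?_)
  rw [map_mul]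
  exact mul_le_one' (map_sub_mul_pow_le_one hQ hA hz j) (map_sub_mul_pow_le_one hQ hA hw j)

lemma map_pairTerm (hQ : v Q = 1) (hA : v A = 1) (z w : F) (k : ℕ) :
    v (pairTerm Q A z w k) = v (∏ j ∈ range k, (z - A * Q ^ j) * (w - A * Q ^ j)) /
      v (∏ j ∈ range k, (1 - z * Q ^ (j + 1)) * (1 - w * Q ^ (j + 1))) := by
  rw [pairTerm_eq_div, map_div₀, map_mul, map_mul, map_pow, map_pow, hQ, hA, one_pow, one_mul,
    one_mul]

lemma IsIntegralPair.map_pairTerm_le_one (h : IsIntegralPair v Q z w k) (hQ : v Q = 1)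
    (hA : v A = 1) : v (pairTerm Q A z w k) ≤ 1 := by
  rw [map_pairTerm hQ hA, h.map_prod_den, div_one, map_prod]
  refine prod_le_one' fun j _ ↦ ?_
  rw [map_mul]
  exact mul_le_one' (map_sub_mul_pow_le_one hQ hA h.left_le_one j)
    (map_sub_mul_pow_le_one hQ hA h.right_le_one j)

lemma IsIntegralPair.map_pairTerm_le (h : IsIntegralPair v Q z w k) (hQ : v Q = 1) (hA : v A = 1)
    (hN : N < k) : v (pairTerm Q A z w k) ≤ v (z - A * Q ^ N) * v (w - A * Q ^ N) := by
  rw [map_pairTerm hQ hA, h.map_prod_den, div_one]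
  exact map_prod_num_le hQ hA h.left_le_one h.right_le_one hN

lemma IsIntegralPair.map_pairTerm_succ_le (h : IsIntegralPair v Q z w k) (hQ : v Q = 1)
    (hA : v A = 1) (hN : N < k + 1) :
    v (pairTerm Q A z w (k + 1)) ≤ v (z - A * Q ^ N) * v (w - A * Q ^ N) /
      (v (1 - z * Q ^ (k + 1)) * v (1 - w * Q ^ (k + 1))) := by
  rw [map_pairTerm hQ hA, prod_range_succ (fun j ↦ (1 - z * Q ^ (j + 1)) * (1 - w * Q ^ (j + 1))),
    map_mul, h.map_prod_den, one_mul, map_mul]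
  exact div_le_div_of_nonneg_right (map_prod_num_le hQ hA h.left_le_one h.right_le_one hN) zero_le

lemma map_coeff_le (hQ : v Q = 1) {z w : ι → F} (i₀ : ι)
    (h : ∀ i ≠ i₀, v (pairTerm Q A (z i) (w i) k) ≤ 1) :
    v (coeff Q A z w k) ≤ v (pairTerm Q A (z i₀) (w i₀) k) := by
  classical
  rw [coeff, map_div₀, map_pow, hQ, one_pow, div_one, map_prod, ← mul_prod_erase _ _ (mem_univ i₀)]
  exact mul_le_of_le_one_right' (prod_le_one' fun i hi ↦ h i (ne_of_mem_erase hi))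

lemma map_term_le (hQ : v Q = 1) (hA : v A = 1) {z w : ι → F}
    (h : ∀ i, IsIntegralPair v Q (z i) (w i) k) (hN : N < k) (i₀ : ι) :
    v (term Q A z w k) ≤ v (z i₀ - A * Q ^ N) * v (w i₀ - A * Q ^ N) := by
  rw [term, map_mul]
  refine (mul_le_of_le_one_left' (map_sub_mul_pow_le_one hQ hA v.map_one.le _)).trans ?_
  exact (map_coeff_le hQ i₀ fun i _ ↦ (h i).map_pairTerm_le_one hQ hA).trans
    ((h i₀).map_pairTerm_le hQ hA hN)

lemma map_sum_range_le {f : ℕ → F} {g : Γ₀} {m : ℕ} (hN : N < m)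
    (head : v (∑ k ∈ range (N + 1), f k) ≤ g) (tail : ∀ k, N < k → k < m → v (f k) ≤ g) :
    v (∑ k ∈ range m, f k) ≤ g := by
  rw [← sum_range_add_sum_Ico f hN]
  refine v.map_add_le head (v.map_sum_le fun k hk ↦ ?_)
  rw [mem_Ico] at hk
  exact tail k hk.1 hk.2

end Valuation

section CyclotomicPlace

variable {F ι Γ₀ : Type*} [Field F] [LinearOrderedCommGroupWithZero Γ₀]
  {v : Valuation F Γ₀} {q : F} {u : ι → F} {m d N l : ℕ}

/-- The residue field of `v` has characteristic zero and in it `q` becomes a primitive `m`-th root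
of unity, although `q ^ m ≠ 1`. -/
structure IsCyclotomicPlace (v : Valuation F Γ₀) (q : F) (m : ℕ) : Prop where
  map_eq_one : v q = 1
  map_natCast : ∀ k : ℕ, k ≠ 0 → v k = 1
  map_one_sub_pow_lt_one : v (1 - q ^ m) < 1
  pow_ne_one : q ^ m ≠ 1
  map_one_sub_pow : ∀ j, ¬ m ∣ j → v (1 - q ^ j) = 1

/-- In the residue field of `v` the parameter `u` becomes a nonzero element distinct from all
powers of `q`. -/
structure IsGenericParameter (v : Valuation F Γ₀) (q u : F) : Prop where
  map_eq_one : v u = 1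
  map_one_sub_mul : ∀ j : ℕ, v (1 - u * q ^ j) = 1
  map_one_sub_inv_mul : ∀ j : ℕ, v (1 - u⁻¹ * q ^ j) = 1

/-- The family of parameters `u` extended by the parameter `1`. -/
def withOne (u : ι → F) (o : Option ι) : F := o.elim 1 u

lemma map_withOne_le_one (hu : ∀ i, v (u i) ≤ 1) (o : Option ι) : v (withOne u o) ≤ 1 := by
  cases o
  · exact v.map_one.le
  · exact hu _

namespace IsCyclotomicPlace

lemma ne_zero (hv : IsCyclotomicPlace v q m) : q ≠ 0 := ne_zero_of_map_eq_one hv.map_eq_one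

lemma map_pow_eq_one (hv : IsCyclotomicPlace v q m) (j : ℕ) : v (q ^ j) = 1 := by
  rw [map_pow, hv.map_eq_one, one_pow]

lemma map_inv_mul_pow_eq_one (hv : IsCyclotomicPlace v q m) (j : ℕ) :
    v (q⁻¹ * (q ^ d) ^ j) = 1 := by
  rw [map_mul, map_inv₀, hv.map_eq_one, inv_one, one_mul, map_pow, hv.map_pow_eq_one, one_pow]

lemma map_geom_sum_le_one (hv : IsCyclotomicPlace v q m) (M : ℕ) :
    v (∑ i ∈ range M, (q ^ m) ^ i) ≤ 1 :=
  v.map_sum_le fun i _ ↦ by rw [map_pow, hv.map_pow_eq_one, one_pow]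

lemma map_one_sub_pow_mul_le (hv : IsCyclotomicPlace v q m) (M : ℕ) :
    v (1 - q ^ (m * M)) ≤ v (1 - q ^ m) := by
  rw [pow_mul, ← mul_neg_geom_sum, map_mul]
  exact mul_le_of_le_one_right' (hv.map_geom_sum_le_one M)

lemma map_geom_sum (hv : IsCyclotomicPlace v q m) {M : ℕ} (hM : M ≠ 0) :
    v (∑ i ∈ range M, (q ^ m) ^ i) = 1 := by
  have residue : v (∑ i ∈ range M, (q ^ m) ^ i - M) < v M := by
    rw [hv.map_natCast M hM, v.map_sub_swap, show (M : F) = ∑ _i ∈ range M, 1 by simp,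
      ← sum_sub_distrib]
    refine v.map_sum_lt one_ne_zero fun i _ ↦ ?_
    rw [← pow_mul]
    exact (hv.map_one_sub_pow_mul_le i).trans_lt hv.map_one_sub_pow_lt_one
  rw [v.map_eq_of_sub_lt residue, hv.map_natCast M hM]

lemma map_one_sub_pow_mul (hv : IsCyclotomicPlace v q m) {M : ℕ} (hM : M ≠ 0) :
    v (1 - q ^ (m * M)) = v (1 - q ^ m) := by
  rw [pow_mul, ← mul_neg_geom_sum, map_mul, hv.map_geom_sum hM, mul_one]

lemma map_one_sub_pow_ne_zero (hv : IsCyclotomicPlace v q m) : v (1 - q ^ m) ≠ 0 :=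
  v.ne_zero_iff.2 (sub_ne_zero.2 hv.pow_ne_one.symm)

lemma pow_ne_one_of_ne_zero (hv : IsCyclotomicPlace v q m) {j : ℕ} (hj : j ≠ 0) : q ^ j ≠ 1 := by
  have hjm : q ^ (m * j) ≠ 1 := fun h ↦ hv.map_one_sub_pow_ne_zero <| by
    rw [← hv.map_one_sub_pow_mul hj, h, sub_self, map_zero]
  exact fun h ↦ hjm (by rw [mul_comm, pow_mul, h, one_pow])

lemma pow_mul_block_eq (hv : IsCyclotomicPlace v q m) (hN : d * N = m * l + 1) (L : ℕ) :
    q⁻¹ * (q ^ d) ^ (2 * (L * m)) * (q ^ d) ^ N = q ^ (m * (2 * d * L + l)) := by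
  rw [mul_assoc, ← pow_add, ← pow_mul,
    show d * (2 * (L * m) + N) = m * (2 * d * L + l) + 1 by linarith, pow_succ',
    inv_mul_cancel_left₀ hv.ne_zero]

lemma map_pow_block_sub_le (hv : IsCyclotomicPlace v q m) (hN : d * N = m * l + 1) (L : ℕ) :
    v ((q ^ d) ^ (L * m) - q⁻¹ * (q ^ d) ^ (2 * (L * m)) * (q ^ d) ^ N) ≤ v (1 - q ^ m) := by
  rw [hv.pow_mul_block_eq hN, show (q ^ d) ^ (L * m) - q ^ (m * (2 * d * L + l)) =
    q ^ (d * L * m) * (1 - q ^ (m * (d * L + l))) by ring, map_mul, hv.map_pow_eq_one, one_mul]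
  exact hv.map_one_sub_pow_mul_le _

lemma isIntegralPair_generic (hv : IsCyclotomicPlace v q m) {u : F} (hu : IsGenericParameter v q u)
    (L n : ℕ) : IsIntegralPair v (q ^ d) (u * (q ^ d) ^ L) (u⁻¹ * (q ^ d) ^ L) n where
  left_le_one := by rw [map_mul, hu.map_eq_one, ← pow_mul, hv.map_pow_eq_one, one_mul]
  right_le_one := by
    rw [map_mul, map_inv₀, hu.map_eq_one, ← pow_mul, hv.map_pow_eq_one, inv_one, one_mul]
  left_den j _ := by rw [mul_assoc, ← pow_add, ← pow_mul, hu.map_one_sub_mul]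
  right_den j _ := by rw [mul_assoc, ← pow_add, ← pow_mul, hu.map_one_sub_inv_mul]

lemma isIntegralPair_withOne (hv : IsCyclotomicPlace v q m)
    (hu : ∀ i, IsGenericParameter v q (u i)) (hmd : m.Coprime d) (L : ℕ) (o : Option ι) :
    IsIntegralPair v (q ^ d) (withOne u o * (q ^ d) ^ (L * m)) (withOne u⁻¹ o * (q ^ d) ^ (L * m))
      (m - 1) := by
  cases o with
  | some i => exact hv.isIntegralPair_generic (hu i) _ _
  | none =>
    have den (j : ℕ) (hj : j < m - 1) : v (1 - 1 * (q ^ d) ^ (L * m) * (q ^ d) ^ (j + 1)) = 1 := by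
      rw [one_mul, ← pow_add, ← pow_mul]
      refine hv.map_one_sub_pow _ fun hdvd ↦ ?_
      have := Nat.le_of_dvd (by omega) ((Nat.dvd_add_right (Dvd.intro_left L rfl)).1
        (hmd.dvd_of_dvd_mul_left hdvd))
      omega
    have le_one : v (1 * (q ^ d) ^ (L * m)) ≤ 1 := by
      rw [one_mul, ← pow_mul, hv.map_pow_eq_one]
    exact ⟨le_one, le_one, den, den⟩

variable [Fintype ι]

lemma map_term_block_le (hv : IsCyclotomicPlace v q m) (hu : ∀ i, IsGenericParameter v q (u i))
    (hmd : m.Coprime d) (hN : d * N = m * l + 1) (L : ℕ) {k : ℕ} (hNk : N < k) (hkm : k < m) :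
    v (term (q ^ d) (q⁻¹ * (q ^ d) ^ (2 * (L * m))) (fun o ↦ withOne u o * (q ^ d) ^ (L * m))
      (fun o ↦ withOne u⁻¹ o * (q ^ d) ^ (L * m)) k) ≤ v (1 - q ^ m) ^ 2 := by
  refine (map_term_le (hv.map_pow_eq_one d) (hv.map_inv_mul_pow_eq_one _)
    (fun o ↦ (hv.isIntegralPair_withOne hu hmd L o).mono (by omega)) hNk none).trans ?_
  simp only [withOne, Option.elim, one_mul]
  rw [sq]
  exact mul_le_mul' (hv.map_pow_block_sub_le hN L) (hv.map_pow_block_sub_le hN L)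

lemma map_sum_block_le (hv : IsCyclotomicPlace v q m) (hu : ∀ i, IsGenericParameter v q (u i))
    (hmd : m.Coprime d) (hNm : N < m) (hN : d * N = m * l + 1) (L : ℕ) :
    v (∑ k ∈ range m, term (q ^ d) (q⁻¹ * (q ^ d) ^ (2 * (L * m)))
      (fun o ↦ withOne u o * (q ^ d) ^ (L * m)) (fun o ↦ withOne u⁻¹ o * (q ^ d) ^ (L * m)) k) ≤
      v (1 - q ^ m) := by
  refine map_sum_range_le hNm ?_ fun k hNk hkm ↦
    (hv.map_term_block_le hu hmd hN L hNk hkm).trans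
      (pow_le_of_le_one zero_le hv.map_one_sub_pow_lt_one.le two_ne_zero)
  refine (map_sum_term_le_map_one_sub_mul_pow (hv.map_pow_eq_one d) (hv.map_inv_mul_pow_eq_one _)
    fun o ↦ (hv.isIntegralPair_withOne hu hmd L o).mono (by omega)).trans ?_
  rw [hv.pow_mul_block_eq hN]
  exact hv.map_one_sub_pow_mul_le _

lemma map_coeff_block_le_one (hv : IsCyclotomicPlace v q m)
    (hu : ∀ i, IsGenericParameter v q (u i)) (hmd : m.Coprime d) (hNm : N < m)
    (hN : d * N = m * l + 1) (L : ℕ) :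
    v (coeff (q ^ d) (q⁻¹ * (q ^ d) ^ (2 * (L * m))) (fun o ↦ withOne u o * (q ^ d) ^ (L * m))
      (fun o ↦ withOne u⁻¹ o * (q ^ d) ^ (L * m)) m) ≤ 1 := by
  have hd : d ≠ 0 := by rintro rfl; omega
  have hQ := hv.map_pow_eq_one d
  have hA := hv.map_inv_mul_pow_eq_one (d := d) (2 * (L * m))
  have generic (o : Option ι) (ho : o ≠ none) : v (pairTerm (q ^ d)
      (q⁻¹ * (q ^ d) ^ (2 * (L * m))) (withOne u o * (q ^ d) ^ (L * m))
      (withOne u⁻¹ o * (q ^ d) ^ (L * m)) m) ≤ 1 := by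
    obtain ⟨i, rfl⟩ := Option.ne_none_iff_exists'.1 ho
    exact (hv.isIntegralPair_generic (hu i) _ _).map_pairTerm_le_one hQ hA
  refine (map_coeff_le hQ none generic).trans ?_
  have pole := (hv.isIntegralPair_withOne hu hmd L none).map_pairTerm_succ_le hQ hA
    (show N < m - 1 + 1 by omega)
  rw [show m - 1 + 1 = m by omega] at pole
  have den : v (1 - (q ^ d) ^ (L * m) * (q ^ d) ^ m) = v (1 - q ^ m) := by
    rw [show (q ^ d) ^ (L * m) * (q ^ d) ^ m = q ^ (m * (d * (L + 1))) by ring]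
    exact hv.map_one_sub_pow_mul (mul_ne_zero hd L.succ_ne_zero)
  simp only [withOne, Option.elim, one_mul, den] at pole ⊢
  refine pole.trans (div_le_one_of_le₀ ?_ zero_le)
  exact mul_le_mul' (hv.map_pow_block_sub_le hN L) (hv.map_pow_block_sub_le hN L)

lemma map_coeff_mul_le_one (hv : IsCyclotomicPlace v q m) (hu : ∀ i, IsGenericParameter v q (u i))
    (hmd : m.Coprime d) (hNm : N < m) (hN : d * N = m * l + 1) (L : ℕ) :
    v (coeff (q ^ d) q⁻¹ (withOne u) (withOne u⁻¹) (L * m)) ≤ 1 := by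
  induction L with
  | zero => simp [coeff, pairTerm]
  | succ L ih =>
    rw [Nat.succ_mul, coeff_add (pow_ne_zero d hv.ne_zero), map_mul]
    exact mul_le_one' ih (hv.map_coeff_block_le_one hu hmd hNm hN L)

lemma exists_mul_eq_mul_add_one (hm : 1 < m) (hmd : m.Coprime d) :
    ∃ N < m, ∃ l, d * N = m * l + 1 := by
  obtain ⟨N, hNm, hN⟩ := Nat.exists_mul_mod_eq_one_of_coprime hmd.symm hm
  exact ⟨N, hNm, d * N / m, by rw [← hN, Nat.div_add_mod]⟩

theorem map_sum_term_le (hv : IsCyclotomicPlace v q m) (hu : ∀ i, IsGenericParameter v q (u i))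
    (hm : 1 < m) (hmd : m.Coprime d) (M : ℕ) :
    v (∑ k ∈ range (M * m), term (q ^ d) q⁻¹ (withOne u) (withOne u⁻¹) k) ≤ v (1 - q ^ m) := by
  obtain ⟨N, hNm, l, hN⟩ := exists_mul_eq_mul_add_one hm hmd
  induction M with
  | zero => simp
  | succ M ih =>
    rw [Nat.succ_mul, sum_range_add]
    simp only [term_add (pow_ne_zero d hv.ne_zero), ← mul_sum]
    refine v.map_add_le ih ?_
    rw [map_mul]
    exact (mul_le_of_le_one_left' (hv.map_coeff_mul_le_one hu hmd hNm hN M)).trans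
      (hv.map_sum_block_le hu hmd hNm hN M)

lemma one_add_geom_sum_mul_sub_inv (hq : q ≠ 0) (d r : ℕ) :
    1 + q * (∑ i ∈ range d, (q ^ (d * r + 1)) ^ i) * ((q ^ d) ^ r - q⁻¹) =
      (q ^ d) ^ (d * r + 1) := by
  have geom := geom_sum_mul (q ^ (d * r + 1)) d
  have factor : q * ((q ^ d) ^ r - q⁻¹) = q ^ (d * r + 1) - 1 := by
    rw [mul_sub, mul_inv_cancel₀ hq]
    ring
  rw [pow_right_comm q d]
  linear_combination geom + (∑ i ∈ range d, (q ^ (d * r + 1)) ^ i) * factor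

lemma map_inv_sub_pow (hv : IsCyclotomicPlace v q m) (d r : ℕ) :
    v (q⁻¹ - (q ^ d) ^ r) = v (1 - q ^ (d * r + 1)) := by
  rw [show q⁻¹ - (q ^ d) ^ r = q⁻¹ * (1 - q ^ (d * r + 1)) by
      rw [pow_succ' q, mul_sub, inv_mul_cancel_left₀ hv.ne_zero, ← pow_mul, mul_one],
    map_mul, map_inv₀, hv.map_eq_one, inv_one, one_mul]

/-- In the second slot the parameter `1` is deformed into `1 + κ (X - q⁻¹)`, where `X` is the
leading parameter and `κ` is such that the value at `X = Q ^ (s + 1)` is `X Q ^ N`. Then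
`X = Q ^ (-N)` and `X = Q ^ (s + 1)` are both zeros of the truncated series and both congruent to
`q⁻¹` modulo `1 - q ^ m`. -/
lemma map_sum_termNum_le_sq {s : ℕ} (hv : IsCyclotomicPlace v q m)
    (hu : ∀ i, IsGenericParameter v q (u i)) (hm : m = d * (s + 1) + 1) (hmN : m = s + 1 + N)
    (hN : d * N = m * l + 1) (hcard : Fintype.card ι * s < N) :
    v (∑ k ∈ range (N + 1), termNum (q ^ d) q⁻¹ (withOne u) (withOne u⁻¹) N k) ≤
      v (1 - q ^ m) ^ 2 := by
  have hQpow (j : ℕ) (hj : j ≠ 0) : (q ^ d) ^ j ≠ 1 := by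
    have hd : d ≠ 0 := by rintro rfl; omega
    rw [← pow_mul]
    exact hv.pow_ne_one_of_ne_zero (mul_ne_zero hd hj)
  let κ (o : Option ι) : F := o.elim (q * ∑ i ∈ range d, (q ^ m) ^ i) 0
  have deformed : (fun o ↦ withOne u⁻¹ o + κ o * ((q ^ d) ^ (s + 1) - q⁻¹)) =
      fun o ↦ o.elim ((q ^ d) ^ (s + 1) * (q ^ d) ^ N) fun i ↦ (u i)⁻¹ := by
    funext o
    cases o with
    | some i => simp [κ, withOne]
    | none =>
      have := one_add_geom_sum_mul_sub_inv hv.ne_zero d (s + 1)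
      rw [← hm] at this
      rw [← pow_add, ← hmN, ← this]
      rfl
  have bound := map_sum_termNum_le_of_deformation (N := N) (A := q⁻¹) (y := (q ^ d) ^ (s + 1))
    (z := withOne u) (w := withOne u⁻¹) (κ := κ) (hv.map_pow_eq_one d)
    (by rw [map_inv₀, hv.map_eq_one, inv_one]) (by rw [← pow_mul, hv.map_pow_eq_one])
    (by rw [← pow_add]; exact hQpow _ (by omega)) (map_withOne_le_one fun i ↦ (hu i).map_eq_one.le)
    (map_withOne_le_one fun i ↦ by simp [(hu i).map_eq_one])
    (fun o ↦ by
      cases o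
      · simpa [κ, hv.map_eq_one] using hv.map_geom_sum_le_one d
      · simp [κ])
    (by
      rw [deformed]
      exact sum_termNum_pow_succ_eq_zero (pow_ne_zero d hv.ne_zero) hQpow
        (fun i ↦ ne_zero_of_map_eq_one (hu i).map_eq_one) hcard)
  have first : v (1 - q⁻¹ * (q ^ d) ^ N) ≤ v (1 - q ^ m) := by
    simpa using hv.map_pow_block_sub_le hN 0
  rw [sq]
  exact bound.trans (mul_le_mul' first (hm ▸ hv.map_inv_sub_pow d (s + 1)).le)

theorem map_sum_term_le_sq {r : ℕ} (hv : IsCyclotomicPlace v q (d * r + 1))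
    (hu : ∀ i, IsGenericParameter v q (u i)) (hr : r ≠ 0) (hcard : Fintype.card ι < d) :
    v (∑ k ∈ range (d * r + 1), term (q ^ d) q⁻¹ (withOne u) (withOne u⁻¹) k) ≤
      v (1 - q ^ (d * r + 1)) ^ 2 := by
  obtain ⟨s, rfl⟩ := Nat.exists_eq_add_one_of_ne_zero hr
  obtain ⟨e, rfl⟩ := Nat.exists_eq_add_one_of_ne_zero hcard.ne_bot
  have hmd : ((e + 1) * (s + 1) + 1).Coprime (e + 1) := by simp
  have hN : (e + 1) * (e * (s + 1) + 1) = ((e + 1) * (s + 1) + 1) * e + 1 := by ring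
  refine map_sum_range_le (N := e * (s + 1) + 1) (by nlinarith) ?_ fun k hNk hkm ↦ by
    simpa using hv.map_term_block_le hu hmd hN 0 hNk hkm
  rw [map_sum_term_eq_map_sum_termNum (hv.map_pow_eq_one _)
    (by rw [map_inv₀, hv.map_eq_one, inv_one]) fun o ↦ by
      simpa using (hv.isIntegralPair_withOne hu hmd 0 o).mono
        (by rw [Nat.add_sub_cancel]; nlinarith)]
  exact hv.map_sum_termNum_le_sq hu rfl (by ring) hN (by nlinarith)

end IsCyclotomicPlace

end CyclotomicPlace

section PrimePlace

variable {S L : Type*} [CommRing S] [Field L] [Algebra S L] [IsFractionRing S L] {p : S}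

variable (L) in
lemma algebraMap_ne_zero_of_not_dvd {f : S} (hf : ¬ p ∣ f) : algebraMap S L f ≠ 0 :=
  IsFractionRing.to_map_eq_zero_iff.not.2 fun h ↦ hf (h ▸ dvd_zero p)

variable [IsDomain S] [UniqueFactorizationMonoid S]

/-- The localization of `S` at the prime element `p`, as a valuation ring of the fraction field. -/
def primeValuationSubring (L : Type*) [Field L] [Algebra S L] [IsFractionRing S L] (hp : Prime p) :
    ValuationSubring L where
  carrier := {x | ∃ f g : S, ¬ p ∣ g ∧ x * algebraMap S L g = algebraMap S L f}
  zero_mem' := ⟨0, 1, hp.not_dvd_one, by simp⟩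
  one_mem' := ⟨1, 1, hp.not_dvd_one, by simp⟩
  add_mem' := by
    rintro x y ⟨f, g, hg, hx⟩ ⟨f', g', hg', hy⟩
    refine ⟨f * g' + f' * g, g * g', hp.not_dvd_mul hg hg', ?_⟩
    rw [map_add, map_mul, map_mul, map_mul, ← hx, ← hy]
    ring
  mul_mem' := by
    rintro x y ⟨f, g, hg, hx⟩ ⟨f', g', hg', hy⟩
    refine ⟨f * f', g * g', hp.not_dvd_mul hg hg', ?_⟩
    rw [map_mul, map_mul, ← hx, ← hy]
    ring
  neg_mem' := by
    rintro x ⟨f, g, hg, hx⟩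
    exact ⟨-f, g, hg, by rw [map_neg, ← hx, neg_mul]⟩
  mem_or_inv_mem' := by
    intro x
    obtain ⟨f, g, hfg, rfl⟩ := IsFractionRing.exists_reduced_fraction (A := S) x
    by_cases hg : p ∣ g
    · have hf : ¬ p ∣ f := fun hf ↦ hp.not_isUnit (hfg hf hg)
      have hf0 := algebraMap_ne_zero_of_not_dvd L hf
      refine Or.inr ⟨g, f, hf, ?_⟩
      rw [IsFractionRing.mk'_eq_div, inv_div, div_mul_cancel₀ _ hf0]
    · exact Or.inl ⟨f, g, hg, IsLocalization.mk'_spec L f g⟩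

/-- The `p`-adic valuation of the fraction field `L` of `S`. -/
def primeValuation (L : Type*) [Field L] [Algebra S L] [IsFractionRing S L] (hp : Prime p) :
    Valuation L (primeValuationSubring L hp).ValueGroup :=
  (primeValuationSubring L hp).valuation

lemma primeValuation_le_one_iff {hp : Prime p} {x : L} : primeValuation L hp x ≤ 1 ↔
    ∃ f g : S, ¬ p ∣ g ∧ x * algebraMap S L g = algebraMap S L f :=
  (primeValuationSubring L hp).valuation_le_one_iff x

lemma primeValuation_algebraMap_le_one (hp : Prime p) (f : S) :
    primeValuation L hp (algebraMap S L f) ≤ 1 :=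
  primeValuation_le_one_iff.2 ⟨f, 1, hp.not_dvd_one, by rw [map_one, mul_one]⟩

lemma primeValuation_algebraMap_eq_one (hp : Prime p) {f : S} (hf : ¬ p ∣ f) :
    primeValuation L hp (algebraMap S L f) = 1 := by
  have hf0 := algebraMap_ne_zero_of_not_dvd L hf
  have inv_le : primeValuation L hp (algebraMap S L f)⁻¹ ≤ 1 :=
    primeValuation_le_one_iff.2 ⟨1, f, hf, by rw [inv_mul_cancel₀ hf0, map_one]⟩
  rw [map_inv₀, inv_le_one₀ ((Valuation.pos_iff _).2 hf0)] at inv_le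
  exact (primeValuation_algebraMap_le_one hp f).antisymm inv_le

lemma primeValuation_algebraMap_self_lt_one (hp : Prime p) :
    primeValuation L hp (algebraMap S L p) < 1 := by
  by_contra! h
  have hp0 : algebraMap S L p ≠ 0 := IsFractionRing.to_map_eq_zero_iff.not.2 hp.ne_zero
  rw [← inv_le_one₀ ((Valuation.pos_iff _).2 hp0), ← map_inv₀] at h
  obtain ⟨f, g, hg, hfg⟩ := primeValuation_le_one_iff.1 h
  rw [inv_mul_eq_iff_eq_mul₀ hp0, ← map_mul] at hfg
  exact hg ⟨f, IsFractionRing.injective S L hfg⟩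

lemma exists_mul_algebraMap_eq_of_primeValuation_le_pow {hp : Prime p} {x : L} {c : ℕ}
    (h : primeValuation L hp x ≤ primeValuation L hp (algebraMap S L p) ^ c) :
    ∃ f g : S, ¬ p ∣ g ∧ x * algebraMap S L g = algebraMap S L (p ^ c * f) := by
  have hpc : algebraMap S L p ^ c ≠ 0 :=
    pow_ne_zero c (IsFractionRing.to_map_eq_zero_iff.not.2 hp.ne_zero)
  rw [← map_pow, ← div_le_one₀ ((Valuation.pos_iff _).2 hpc), ← map_div₀] at h
  obtain ⟨f, g, hg, hfg⟩ := primeValuation_le_one_iff.1 h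
  refine ⟨f, g, hg, ?_⟩
  rw [map_mul, map_pow, ← hfg, ← mul_assoc, mul_div_cancel₀ x hpc]

end PrimePlace

lemma prime_toMvPolynomial {k σ : Type*} [Field k] (i : σ) {f : Polynomial k} (hf : Prime f) :
    Prime (f.toMvPolynomial i) := by
  let e : MvPolynomial ({i} : Set σ) k ≃ₐ[k] Polynomial k :=
    MvPolynomial.uniqueAlgEquiv k ({i} : Set σ)
  have factor : ((MvPolynomial.rename Subtype.val).comp e.symm.toAlgHom :
      Polynomial k →ₐ[k] MvPolynomial σ k) = Polynomial.toMvPolynomial i := by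
    ext
    simp [e]
  rw [← factor]
  exact (MvPolynomial.prime_rename_iff _).2 ((MulEquiv.prime_iff e.symm).2 hf)

section RationalFunctions

open MvPolynomial (X aeval)

variable {m n d : ℕ}

lemma Phi_eq_toMvPolynomial (m : ℕ) : Phi m = (Polynomial.cyclotomic m ℚ).toMvPolynomial 0 := rfl

lemma prime_Phi (hm : m ≠ 0) : Prime (Phi m) :=
  prime_toMvPolynomial 0 (Polynomial.cyclotomic.irreducible_rat hm.bot_lt).prime

/-- The `Φ_m(q)`-adic valuation of the field of rational functions. -/
abbrev cyclotomicValuation (hm : m ≠ 0) :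
    Valuation K (primeValuationSubring K (prime_Phi hm)).ValueGroup :=
  primeValuation K (prime_Phi hm)

lemma Phi_dvd_one_sub_pow (m : ℕ) : Phi m ∣ 1 - X 0 ^ m := by
  rw [← dvd_neg, neg_sub]
  simpa [Phi_eq_toMvPolynomial] using
    map_dvd (Polynomial.toMvPolynomial 0) (Polynomial.cyclotomic.dvd_X_pow_sub_one m ℚ)

lemma qintR_eq_prod_Phi (hn : n ≠ 0) : qintR n = ∏ m ∈ n.divisors.erase 1, Phi m := by
  simpa [qintR, Phi_eq_toMvPolynomial] using (congrArg (Polynomial.toMvPolynomial (0 : Fin 4))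
    (Polynomial.prod_cyclotomic_eq_geom_sum hn.bot_lt ℚ)).symm

/-- A complex point at which `q` is a primitive `m`-th root of unity and the other variables are
not roots of unity. -/
def cyclotomicPoint (m : ℕ) : Fin 4 → ℂ :=
  Fin.cons (Complex.exp (2 * Real.pi * Complex.I / m)) fun _ ↦ 2

lemma isPrimitiveRoot_cyclotomicPoint (hm : m ≠ 0) : IsPrimitiveRoot (cyclotomicPoint m 0) m :=
  Complex.isPrimitiveRoot_exp m hm

lemma cyclotomicPoint_of_ne_zero (m : ℕ) {i : Fin 4} (hi : i ≠ 0) : cyclotomicPoint m i = 2 := by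
  obtain ⟨j, rfl⟩ := Fin.exists_succ_eq.2 hi
  rfl

lemma not_Phi_dvd_of_aeval_ne_zero (hm : m ≠ 0) {f : R} (hf : aeval (cyclotomicPoint m) f ≠ 0) :
    ¬ Phi m ∣ f := by
  have root := (isPrimitiveRoot_cyclotomicPoint hm).isRoot_cyclotomic hm.bot_lt
  rw [← Polynomial.map_cyclotomic m (algebraMap ℚ ℂ), Polynomial.IsRoot, Polynomial.eval_map,
    ← Polynomial.aeval_def] at root
  rintro ⟨g, rfl⟩
  rw [map_mul, Phi_eq_toMvPolynomial, MvPolynomial.aeval_toMvPolynomial, root, zero_mul] at hf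
  exact hf rfl

lemma cyclotomicValuation_eq_one (hm : m ≠ 0) {f : R} (hf : aeval (cyclotomicPoint m) f ≠ 0) :
    cyclotomicValuation hm (algebraMap R K f) = 1 :=
  primeValuation_algebraMap_eq_one _ (not_Phi_dvd_of_aeval_ne_zero hm hf)

lemma algebraMap_X_ne_zero (i : Fin 4) : algebraMap R K (X i) ≠ 0 :=
  IsFractionRing.to_map_eq_zero_iff.not.2 (MvPolynomial.X_ne_zero i)

lemma one_sub_qv_pow_eq_algebraMap (j : ℕ) : 1 - qv ^ j = algebraMap R K (1 - X 0 ^ j) := by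
  rw [map_sub, map_one, map_pow, qv]

lemma cyclotomicValuation_one_sub_qv_pow_le (hm : m ≠ 0) :
    cyclotomicValuation hm (1 - qv ^ m) ≤
      cyclotomicValuation hm (algebraMap R K (Phi m)) := by
  obtain ⟨f, hf⟩ := Phi_dvd_one_sub_pow m
  rw [one_sub_qv_pow_eq_algebraMap, hf, map_mul, map_mul]
  exact mul_le_of_le_one_right' (primeValuation_algebraMap_le_one _ f)

lemma isCyclotomicPlace_cyclotomicValuation (hm : m ≠ 0) :
    IsCyclotomicPlace (cyclotomicValuation hm) qv m where
  map_eq_one := cyclotomicValuation_eq_one hm <| by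
    simpa using (isPrimitiveRoot_cyclotomicPoint hm).ne_zero hm
  map_natCast k hk := by
    simpa using cyclotomicValuation_eq_one hm (f := (k : R)) (by simpa using hk)
  map_one_sub_pow_lt_one :=
    (cyclotomicValuation_one_sub_qv_pow_le hm).trans_lt (primeValuation_algebraMap_self_lt_one _)
  pow_ne_one h := by
    rw [qv, ← map_pow, ← map_one (algebraMap R K)] at h
    have eval_two := congrArg (MvPolynomial.eval fun _ ↦ 2) (IsFractionRing.injective R K h)
    exact (one_lt_pow₀ one_lt_two hm).ne' (by simpa using eval_two)
  map_one_sub_pow j hj := by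
    rw [one_sub_qv_pow_eq_algebraMap]
    refine cyclotomicValuation_eq_one hm ?_
    rw [map_sub, map_one, map_pow, MvPolynomial.aeval_X, sub_ne_zero]
    exact fun h ↦ hj ((isPrimitiveRoot_cyclotomicPoint hm).dvd_of_pow_eq_one j h.symm)

lemma isGenericParameter_X (hm : m ≠ 0) {i : Fin 4} (hi : i ≠ 0) :
    IsGenericParameter (cyclotomicValuation hm) qv (algebraMap R K (X i)) := by
  have norm_pow (j : ℕ) : ‖cyclotomicPoint m 0 ^ j‖ = 1 := by
    rw [norm_pow, (isPrimitiveRoot_cyclotomicPoint hm).norm'_eq_one hm, one_pow]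
  have map_X := cyclotomicValuation_eq_one hm (f := X i) (by simp [cyclotomicPoint_of_ne_zero m hi])
  refine ⟨map_X, fun j ↦ ?_, fun j ↦ ?_⟩
  · have expand : 1 - algebraMap R K (X i) * qv ^ j = algebraMap R K (1 - X i * X 0 ^ j) := by
      rw [map_sub, map_one, map_mul, map_pow, qv]
    rw [expand]
    refine cyclotomicValuation_eq_one hm fun h ↦ ?_
    simp only [map_sub, map_one, map_mul, map_pow, MvPolynomial.aeval_X,
      cyclotomicPoint_of_ne_zero m hi] at h
    simpa [norm_pow] using congrArg norm (sub_eq_zero.1 h)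
  · have factor : 1 - (algebraMap R K (X i))⁻¹ * qv ^ j =
        (algebraMap R K (X i))⁻¹ * algebraMap R K (X i - X 0 ^ j) := by
      rw [map_sub, map_pow, mul_sub, inv_mul_cancel₀ (algebraMap_X_ne_zero i), qv]
    rw [factor, map_mul, map_inv₀, map_X, inv_one, one_mul]
    refine cyclotomicValuation_eq_one hm fun h ↦ ?_
    simp only [map_sub, map_pow, MvPolynomial.aeval_X, cyclotomicPoint_of_ne_zero m hi] at h
    simpa [norm_pow] using congrArg norm (sub_eq_zero.1 h)

theorem modCong_prod_Phi_pow {D : Finset ℕ} (c : ℕ → ℕ) (hD : ∀ m ∈ D, m ≠ 0) {x : K}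
    (hx : ∀ m (hm : m ∈ D), cyclotomicValuation (hD m hm) x ≤
      cyclotomicValuation (hD m hm) (algebraMap R K (Phi m)) ^ c m) :
    modCong (∏ m ∈ D, Phi m ^ c m) x := by
  obtain ⟨a, b, hab, hmk⟩ := IsFractionRing.exists_reduced_fraction (A := R) x
  have hxb : x * algebraMap R K b = algebraMap R K a := by
    rw [← hmk, IsLocalization.mk'_spec]
  have pow_dvd (m : ℕ) (hm : m ∈ D) : Phi m ^ c m ∣ a := by
    obtain ⟨f, g, hg, hfg⟩ := exists_mul_algebraMap_eq_of_primeValuation_le_pow (hx m hm)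
    have cross : a * g = Phi m ^ c m * (f * b) := by
      apply IsFractionRing.injective R K
      rw [← mul_assoc, map_mul, map_mul _ _ (b : R), ← hfg, ← hxb, mul_right_comm]
    exact (prime_Phi (hD m hm)).pow_dvd_of_dvd_mul_right _ hg ⟨_, cross⟩
  have coprime : (D : Set ℕ).Pairwise (Function.onFun IsCoprime fun m ↦ Phi m ^ c m) :=
    fun i _ j _ hij ↦ ((Polynomial.cyclotomic.isCoprime_rat hij).map
      (Polynomial.toMvPolynomial (0 : Fin 4)).toRingHom).pow
  obtain ⟨f, rfl⟩ := prod_dvd_of_coprime coprime pow_dvd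
  exact ⟨f, b, nonZeroDivisors.ne_zero b.2,
    fun p hp hpM hpb ↦ hp.not_isUnit (hab (hpM.mul_right f) hpb), hxb⟩

/-- The `k`-th summand of the series: the very-well-poised term with base `q ^ d`, leading
parameter `q⁻¹` and parameter pairs `(1, 1)`, `(a, a⁻¹)`, `(b, b⁻¹)`, divided by `1 - q`. -/
def summand (d k : ℕ) : K :=
  qint (2 * d * k - 1) *
    (poch (av * qv ^ (-1 : ℤ)) (qv ^ (d : ℤ)) k * poch (qv ^ (-1 : ℤ) / av) (qv ^ (d : ℤ)) k *
      poch (bv * qv ^ (-1 : ℤ)) (qv ^ (d : ℤ)) k * poch (qv ^ (-1 : ℤ) / bv) (qv ^ (d : ℤ)) k *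
      poch (qv ^ (-1 : ℤ)) (qv ^ (d : ℤ)) k ^ 2) /
    (poch (av * qv ^ (d : ℤ)) (qv ^ (d : ℤ)) k * poch (qv ^ (d : ℤ) / av) (qv ^ (d : ℤ)) k *
      poch (bv * qv ^ (d : ℤ)) (qv ^ (d : ℤ)) k * poch (qv ^ (d : ℤ) / bv) (qv ^ (d : ℤ)) k *
      poch (qv ^ (d : ℤ)) (qv ^ (d : ℤ)) k ^ 2) *
    qv ^ ((2 * (d : ℤ) + 3) * k)

lemma pairTerm_inv_eq (Q A : K) {z : K} (hz : z ≠ 0) (k : ℕ) :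
    pairTerm Q A z z⁻¹ k = (Q / A) ^ k * (poch (z * A) Q k * poch (A / z) Q k) /
      (poch (z * Q) Q k * poch (Q / z) Q k) := by
  have num (j : ℕ) : (z - A * Q ^ j) * (z⁻¹ - A * Q ^ j) =
      (1 - z * A * Q ^ j) * (1 - A / z * Q ^ j) := by
    field_simp
  have den (j : ℕ) : (1 - z * Q ^ (j + 1)) * (1 - z⁻¹ * Q ^ (j + 1)) =
      (1 - z * Q * Q ^ j) * (1 - Q / z * Q ^ j) := by
    rw [pow_succ', div_eq_inv_mul, mul_assoc z, mul_assoc z⁻¹]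
  simp only [pairTerm_eq_div, num, den, prod_mul_distrib, poch, div_pow]
  rw [div_mul_eq_mul_div, div_div]

lemma qint_eq (d k : ℕ) :
    qint (2 * d * k - 1) = (1 - qv)⁻¹ * (1 - qv⁻¹ * (qv ^ d) ^ (2 * k)) := by
  rw [qint, zpow_sub₀ (show qv ≠ 0 from algebraMap_X_ne_zero 0), zpow_one, div_eq_inv_mul,
    div_eq_inv_mul, ← pow_mul, ← zpow_natCast qv (d * (2 * k))]
  push_cast
  ring_nf

lemma summand_eq_term (d k : ℕ) :
    summand d k =
      (1 - qv)⁻¹ * term (qv ^ d) qv⁻¹ (withOne ![av, bv]) (withOne ![av, bv]⁻¹) k := by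
  have ha : av ≠ 0 := algebraMap_X_ne_zero 1
  have hb : bv ≠ 0 := algebraMap_X_ne_zero 2
  have hq : qv ≠ 0 := algebraMap_X_ne_zero 0
  have power : qv ^ ((2 * (d : ℤ) + 3) * k) = ((qv ^ d / qv⁻¹) ^ k) ^ 3 / (qv ^ d) ^ k := by
    rw [show (2 * (d : ℤ) + 3) * k = ((2 * d + 3) * k : ℕ) by push_cast; rfl, zpow_natCast,
      div_inv_eq_mul, eq_div_iff (pow_ne_zero k (pow_ne_zero d hq))]
    ring
  have pair_one : pairTerm (qv ^ d) qv⁻¹ 1 1 k = _ :=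
    inv_one (G := K) ▸ pairTerm_inv_eq (qv ^ d) qv⁻¹ one_ne_zero k
  simp only [term, coeff, Fintype.prod_option, Fin.prod_univ_two, withOne, Option.elim,
    Pi.inv_apply, Matrix.cons_val_zero, Matrix.cons_val_one]
  rw [pair_one, pairTerm_inv_eq _ _ ha, pairTerm_inv_eq _ _ hb, summand, power, qint_eq]
  simp only [zpow_neg_one, zpow_natCast, one_mul, div_one]
  ring

lemma isGenericParameter_av_bv (hm : m ≠ 0) (i : Fin 2) :
    IsGenericParameter (cyclotomicValuation hm) qv (![av, bv] i) := by
  fin_cases i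
  · exact isGenericParameter_X hm one_ne_zero
  · exact isGenericParameter_X hm (by decide)

lemma cyclotomicValuation_sum_summand_le (hm : 1 < m) {c : ℕ}
    (h : cyclotomicValuation hm.ne_bot (∑ k ∈ range n, term (qv ^ d) qv⁻¹
      (withOne ![av, bv]) (withOne ![av, bv]⁻¹) k) ≤
        cyclotomicValuation hm.ne_bot (1 - qv ^ m) ^ c) :
    cyclotomicValuation hm.ne_bot (∑ k ∈ range n, summand d k) ≤
      cyclotomicValuation hm.ne_bot (algebraMap R K (Phi m)) ^ c := by
  have unit := (isCyclotomicPlace_cyclotomicValuation hm.ne_bot).map_one_sub_pow 1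
    (Nat.dvd_one.not.2 hm.ne')
  rw [pow_one] at unit
  simp only [summand_eq_term, ← mul_sum]
  rw [map_mul, map_inv₀, unit, inv_one, one_mul]
  exact h.trans (pow_le_pow_left' (cyclotomicValuation_one_sub_qv_pow_le hm.ne_bot) c)

theorem cyclotomicValuation_sum_summand_le_of_dvd (hm : 1 < m) (hmn : m ∣ n) (hnd : n.Coprime d) :
    cyclotomicValuation hm.ne_bot (∑ k ∈ range n, summand d k) ≤
      cyclotomicValuation hm.ne_bot (algebraMap R K (Phi m)) ^ 1 := by
  obtain ⟨M, rfl⟩ := hmn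
  refine cyclotomicValuation_sum_summand_le hm ?_
  rw [pow_one, mul_comm]
  exact (isCyclotomicPlace_cyclotomicValuation hm.ne_bot).map_sum_term_le
    (isGenericParameter_av_bv hm.ne_bot) hm hnd.coprime_mul_right M

theorem cyclotomicValuation_sum_summand_le_sq (hn : 1 < n) (hd : 3 ≤ d)
    (hmod : (n : ℤ) ≡ 1 [ZMOD d]) :
    cyclotomicValuation hn.ne_bot (∑ k ∈ range n, summand d k) ≤
      cyclotomicValuation hn.ne_bot (algebraMap R K (Phi n)) ^ 2 := by
  obtain ⟨r, rfl⟩ : ∃ r, n = d * r + 1 := by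
    obtain ⟨r, hr⟩ := (Nat.modEq_iff_dvd' hn.le).1 (Int.natCast_modEq_iff.1 hmod.symm)
    exact ⟨r, by omega⟩
  refine cyclotomicValuation_sum_summand_le hn ?_
  exact (isCyclotomicPlace_cyclotomicValuation hn.ne_bot).map_sum_term_le_sq
    (isGenericParameter_av_bv hn.ne_bot) (by rintro rfl; omega) (by rw [Fintype.card_fin]; omega)

lemma qintR_mul_Phi_eq_prod (hn : 1 < n) :
    qintR n * Phi n = ∏ m ∈ n.divisors.erase 1, Phi m ^ (if m = n then 2 else 1) := by
  have mem : n ∈ n.divisors.erase 1 :=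
    mem_erase.2 ⟨hn.ne', Nat.mem_divisors_self n hn.ne_bot⟩
  have step (m : ℕ) : Phi m ^ (if m = n then 2 else 1) = Phi m * if m = n then Phi m else 1 := by
    split_ifs
    · exact sq _
    · rw [pow_one, mul_one]
  simp only [step, prod_mul_distrib, prod_ite_eq', mem, if_true, qintR_eq_prod_Phi hn.ne_bot]

end RationalFunctions

end WellPoised

open WellPoised in
theorem stmt5_general (n d : ℕ) (hn : 1 < n) (hnd : Nat.gcd n d = 1) :
    (3 ≤ d → ((n : ℤ) ≡ 1 [ZMOD (d : ℤ)]) →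
      modCong (qintR n * Phi n) (∑ k ∈ Finset.range n, summand d k)) ∧
    modCong (qintR n) (∑ k ∈ Finset.range n, summand d k) := by
  have one_lt {m : ℕ} (hm : m ∈ n.divisors.erase 1) : 1 < m :=
    Nat.one_lt_iff_ne_zero_and_ne_one.2
      ⟨(Nat.pos_of_mem_divisors (mem_of_mem_erase hm)).ne', ne_of_mem_erase hm⟩
  have le_one (m : ℕ) (hm : m ∈ n.divisors.erase 1) :=
    cyclotomicValuation_sum_summand_le_of_dvd (one_lt hm)
      (Nat.dvd_of_mem_divisors (mem_of_mem_erase hm)) hnd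
  constructor
  · intro hd hmod
    rw [qintR_mul_Phi_eq_prod hn]
    refine modCong_prod_Phi_pow _ (fun m hm ↦ (one_lt hm).ne_bot) fun m hm ↦ ?_
    split_ifs with hmn
    · subst hmn
      exact cyclotomicValuation_sum_summand_le_sq hn hd hmod
    · exact le_one m hm
  · rw [qintR_eq_prod_Phi hn.ne_bot]
    simpa only [pow_one] using
      modCong_prod_Phi_pow (fun _ ↦ 1) (fun m hm ↦ (one_lt hm).ne_bot) le_one

theorem stmt5 (n d : ℕ) (hn : 1 < n) (hd : 3 ≤ d) (hnd : Nat.gcd n d = 1) :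
    (((n : ℤ) ≡ 1 [ZMOD (d : ℤ)]) →
      modCong (qintR n * Phi n)
        (∑ k ∈ Finset.range n,
          qint (2 * d * k - 1) *
            (poch (av * qv ^ (-1 : ℤ)) (qv ^ (d : ℤ)) k * poch (qv ^ (-1 : ℤ) / av) (qv ^ (d : ℤ)) k *
              poch (bv * qv ^ (-1 : ℤ)) (qv ^ (d : ℤ)) k * poch (qv ^ (-1 : ℤ) / bv) (qv ^ (d : ℤ)) k *
              poch (qv ^ (-1 : ℤ)) (qv ^ (d : ℤ)) k ^ 2) /
            (poch (av * qv ^ (d : ℤ)) (qv ^ (d : ℤ)) k * poch (qv ^ (d : ℤ) / av) (qv ^ (d : ℤ)) k *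
              poch (bv * qv ^ (d : ℤ)) (qv ^ (d : ℤ)) k * poch (qv ^ (d : ℤ) / bv) (qv ^ (d : ℤ)) k *
              poch (qv ^ (d : ℤ)) (qv ^ (d : ℤ)) k ^ 2) *
            qv ^ ((2 * (d : ℤ) + 3) * k))) ∧
    (¬ ((n : ℤ) ≡ 1 [ZMOD (d : ℤ)]) →
      modCong (qintR n)
        (∑ k ∈ Finset.range n,
          qint (2 * d * k - 1) *
            (poch (av * qv ^ (-1 : ℤ)) (qv ^ (d : ℤ)) k * poch (qv ^ (-1 : ℤ) / av) (qv ^ (d : ℤ)) k *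
              poch (bv * qv ^ (-1 : ℤ)) (qv ^ (d : ℤ)) k * poch (qv ^ (-1 : ℤ) / bv) (qv ^ (d : ℤ)) k *
              poch (qv ^ (-1 : ℤ)) (qv ^ (d : ℤ)) k ^ 2) /
            (poch (av * qv ^ (d : ℤ)) (qv ^ (d : ℤ)) k * poch (qv ^ (d : ℤ) / av) (qv ^ (d : ℤ)) k *
              poch (bv * qv ^ (d : ℤ)) (qv ^ (d : ℤ)) k * poch (qv ^ (d : ℤ) / bv) (qv ^ (d : ℤ)) k *
              poch (qv ^ (d : ℤ)) (qv ^ (d : ℤ)) k ^ 2) *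
            qv ^ ((2 * (d : ℤ) + 3) * k))) :=
  ⟨(stmt5_general n d hn hnd).1 hd, fun _ ↦ (stmt5_general n d hn hnd).2⟩

end
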